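/- There exists a jointly smooth function f₃ : ℝ × ℝ → ℂ², (x,λ) ↦ f₃(x,λ), such that: (i) for every λ ∈ ℝ, f₃(·,λ) is a solution of ℋf = (λ²+1)f; (ii) sup over all λ ∈ ℝ and x ∈ ℝ of |e^(μx) f₃(x,λ)| is finite (with bound depending only on V); and (iii) for all integers k, ℓ ≥ 0 there is a constant C_{k,ℓ} such that |∂_λ^ℓ ∂ₓ^k (e^(μx) f₃(x,λ) − (0,1))| ≤ C_{k,ℓ} μ^(−1−ℓ) e^(−γx) for all x ≥ 0 and all λ ∈ ℝ. -/

import Mathlib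

noncomputable section

open Real MeasureTheory

/-- The matrix Schrödinger operator `ℋ` acting on `f = (f₁, f₂) : ℝ → ℂ²`:
`ℋf = (−f₁'' + f₁ + V₁f₁ + V₂f₂, f₂'' − f₂ − V₂f₁ − V₁f₂)`. -/
def matH (V₁ V₂ : ℝ → ℝ) (f : ℝ → ℂ × ℂ) (x : ℝ) : ℂ × ℂ :=
  (-(iteratedDeriv 2 (fun y => (f y).1) x) + (f x).1
      + (V₁ x : ℂ) * (f x).1 + (V₂ x : ℂ) * (f x).2,
    iteratedDeriv 2 (fun y => (f y).2) x - (f x).2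
      - (V₂ x : ℂ) * (f x).1 - (V₁ x : ℂ) * (f x).2)

/-- `f` is a (classical, twice continuously differentiable) solution of `ℋf = z f`. -/
def IsSolution (V₁ V₂ : ℝ → ℝ) (z : ℂ) (f : ℝ → ℂ × ℂ) : Prop :=
  ContDiff ℝ 2 f ∧ ∀ x : ℝ, matH V₁ V₂ f x = z • f x

/-- The potentials `V₁, V₂` are smooth, even, and exponentially decaying with rate `γ ∈ (0,1)`,
together with all derivatives. -/
def PotentialHyp (γ : ℝ) (V₁ V₂ : ℝ → ℝ) : Prop :=
  0 < γ ∧ γ < 1 ∧ ContDiff ℝ (⊤ : ℕ∞) V₁ ∧ ContDiff ℝ (⊤ : ℕ∞) V₂ ∧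
    (∀ x, V₁ (-x) = V₁ x) ∧ (∀ x, V₂ (-x) = V₂ x) ∧
    ∀ k : ℕ, ∃ C : ℝ, ∀ x : ℝ,
      |iteratedDeriv k V₁ x| + |iteratedDeriv k V₂ x| ≤ C * Real.exp (-γ * |x|)

/-- `μ(λ) = √(λ² + 2)`. -/
def mu (lam : ℝ) : ℝ := Real.sqrt (lam ^ 2 + 2)

/-! Let `W` be the matrix of potentials. The function `g(x, λ) = e^{μx} f₃(x, λ)` is sought as the
solution of the Volterra equation `g(x) = e + ∫₀^∞ k_λ(t) W(x + t) g(x + t) dt`, where `e = (0, 1)`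
and `k_λ` is `e^{-μt}` times the fundamental solution at zero potential; `k_λ` is bounded in `t`
and of order `-1` in `λ`. Translating the base point turns `x` into a parameter `s`:
the equation on `[s, ∞)` reads `(1 - T(s, λ)) h = e` for bounded continuous functions `h` on
`[0, ∞)`. The operator `T` is a symbol in `(s, λ)` of order `-1` and decay rate `γ` in `s ≥ 0`,
because differentiation in `s` falls on `W` and differentiation in `λ` on `k_λ`. The powers `Tⁿ` are
bounded by `Cⁿ / n!`, uniformly in `(s, λ)`, so `(1 - T)⁻¹` exists everywhere and is a symbol of
order `0`. Hence `g - e`, the value at `0` of `(1 - T)⁻¹ T e`, is a symbol of order `-1` and rate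
`γ`, which is the estimate on all derivatives. -/

open Filter Topology Asymptotics
open scoped BoundedContinuousFunction NNReal

lemma one_le_mu (l : ℝ) : 1 ≤ mu l :=
  Real.one_le_sqrt.mpr (by nlinarith [sq_nonneg l])

lemma mu_pos (l : ℝ) : 0 < mu l := zero_lt_one.trans_le (one_le_mu l)

lemma mu_sq (l : ℝ) : mu l ^ 2 = l ^ 2 + 2 := Real.sq_sqrt (by positivity)

lemma abs_le_mu (l : ℝ) : |l| ≤ mu l := Real.abs_le_sqrt (by linarith)

lemma hasDerivAt_mu (l : ℝ) : HasDerivAt mu (l / mu l) l := by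
  have h : HasDerivAt (fun l : ℝ ↦ l ^ 2 + 2) (2 * l) l := by
    simpa using (hasDerivAt_pow 2 l).add_const 2
  exact (h.sqrt (by positivity)).congr_deriv (mul_div_mul_left _ _ two_ne_zero)

lemma contDiff_mu {n : WithTop ℕ∞} : ContDiff ℝ n mu :=
  ((contDiff_id.pow 2).add contDiff_const).sqrt fun l ↦ by positivity

lemma continuous_mu_rpow (m : ℝ) : Continuous fun l ↦ mu l ^ m :=
  contDiff_mu (n := 0).continuous.rpow_const fun l ↦ .inl (mu_pos l).ne'

section Symbols

variable {X Y Z : Type*} [NormedAddCommGroup X] [NormedSpace ℝ X] [NormedAddCommGroup Y]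
  [NormedSpace ℝ Y] [NormedAddCommGroup Z] [NormedSpace ℝ Z] {n : ℕ} {m m' w w' : ℝ}

/-- The derivative at a point of a function on `ℝ × ℝ` whose partial derivatives are `a`, `b`. -/
def ofPartials (a b : X) : ℝ × ℝ →L[ℝ] X :=
  (ContinuousLinearMap.fst ℝ ℝ ℝ).smulRight a + (ContinuousLinearMap.snd ℝ ℝ ℝ).smulRight b

/-- The size `μ(λ)^m e^{-ws}` at `p = (s, λ)` of a symbol of order `m` and decay rate `w`. -/
def symbolWeight (m w : ℝ) (p : ℝ × ℝ) : ℝ := mu p.2 ^ m * exp (-w * p.1)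

/-- `f(s, λ)` is an `n` times differentiable symbol of order `m` and decay rate `w`: for
`k + l ≤ n` the derivative `∂_s^k ∂_λ^l f` is `O(μ(λ)^(m - l) e^{-ws})`, uniformly for `s ≥ 0`. -/
def IsSymbol : ℕ → ℝ → ℝ → (ℝ × ℝ → X) → Prop
  | 0, m, w, f => f =O[𝓟 {p | 0 ≤ p.1}] symbolWeight m w
  | n + 1, m, w, f => f =O[𝓟 {p | 0 ≤ p.1}] symbolWeight m w ∧
      ∃ fs fl : ℝ × ℝ → X, (∀ p, HasFDerivAt f (ofPartials (fs p) (fl p)) p) ∧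
        IsSymbol n m w fs ∧ IsSymbol n (m - 1) w fl

@[simp]
lemma ofPartials_apply (a b : X) (v : ℝ × ℝ) : ofPartials a b v = v.1 • a + v.2 • b := rfl

lemma contDiff_ofPartials {fs fl : ℝ × ℝ → X} {k : WithTop ℕ∞} (hs : ContDiff ℝ k fs)
    (hl : ContDiff ℝ k fl) : ContDiff ℝ k fun p ↦ ofPartials (fs p) (fl p) :=
  (contDiff_const.smulRight hs).add (contDiff_const.smulRight hl)

lemma hasFDerivAt_comp_fst {f : ℝ → X} {f' : X} {p : ℝ × ℝ} (h : HasDerivAt f f' p.1) :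
    HasFDerivAt (fun p : ℝ × ℝ ↦ f p.1) (ofPartials f' 0) p :=
  (h.hasFDerivAt.comp p hasFDerivAt_fst).congr_fderiv (by ext <;> simp)

lemma hasFDerivAt_comp_snd {f : ℝ → X} {f' : X} {p : ℝ × ℝ} (h : HasDerivAt f f' p.2) :
    HasFDerivAt (fun p : ℝ × ℝ ↦ f p.2) (ofPartials 0 f') p :=
  (h.hasFDerivAt.comp p hasFDerivAt_snd).congr_fderiv (by ext <;> simp)

lemma hasDerivAt_partial_fst {f : ℝ × ℝ → X} {a b : X} {p : ℝ × ℝ}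
    (h : HasFDerivAt f (ofPartials a b) p) : HasDerivAt (fun s ↦ f (s, p.2)) a p.1 := by
  simpa [Function.comp_def] using
    h.comp_hasDerivAt p.1 ((hasDerivAt_id p.1).prodMk (hasDerivAt_const p.1 p.2))

lemma hasDerivAt_partial_snd {f : ℝ × ℝ → X} {a b : X} {p : ℝ × ℝ}
    (h : HasFDerivAt f (ofPartials a b) p) : HasDerivAt (fun l ↦ f (p.1, l)) b p.2 := by
  simpa [Function.comp_def] using
    h.comp_hasDerivAt p.2 ((hasDerivAt_const p.2 p.1).prodMk (hasDerivAt_id p.2))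

lemma symbolWeight_nonneg (m w : ℝ) (p : ℝ × ℝ) : 0 ≤ symbolWeight m w p :=
  mul_nonneg (rpow_nonneg (mu_pos _).le _) (exp_pos _).le

lemma symbolWeight_mul (m m' w w' : ℝ) (p : ℝ × ℝ) :
    symbolWeight m w p * symbolWeight m' w' p = symbolWeight (m + m') (w + w') p := by
  simp only [symbolWeight, rpow_add (mu_pos _), neg_add, add_mul, Real.exp_add]
  ring

lemma symbolWeight_isBigO (hm : m ≤ m') (hw : w' ≤ w) :
    symbolWeight m w =O[𝓟 {p | 0 ≤ p.1}] symbolWeight m' w' := by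
  refine isBigO_principal.mpr ⟨1, fun p (hp : 0 ≤ p.1) ↦ ?_⟩
  rw [one_mul, norm_of_nonneg (symbolWeight_nonneg ..), norm_of_nonneg (symbolWeight_nonneg ..)]
  unfold symbolWeight
  have := (mu_pos p.2).le
  gcongr
  exact one_le_mu _

namespace IsSymbol

lemma isBigO {f : ℝ × ℝ → X} (hf : IsSymbol n m w f) :
    f =O[𝓟 {p | 0 ≤ p.1}] symbolWeight m w := by
  cases n with
  | zero => exact hf
  | succ n => exact hf.1

lemma mono {f : ℝ × ℝ → X} (hf : IsSymbol n m w f) (hm : m ≤ m') (hw : w' ≤ w) :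
    IsSymbol n m' w' f := by
  induction n generalizing f m m' with
  | zero => exact hf.isBigO.trans (symbolWeight_isBigO hm hw)
  | succ n ih =>
    obtain ⟨hb, fs, fl, hd, hs, hl⟩ := hf
    exact ⟨hb.trans (symbolWeight_isBigO hm hw), fs, fl, hd, ih hs hm,
      ih hl (sub_le_sub_right hm 1)⟩

lemma of_succ {f : ℝ × ℝ → X} (hf : IsSymbol (n + 1) m w f) : IsSymbol n m w f := by
  induction n generalizing f m with
  | zero => exact hf.isBigO
  | succ n ih =>
    obtain ⟨hb, fs, fl, hd, hs, hl⟩ := hf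
    exact ⟨hb, fs, fl, hd, ih hs, ih hl⟩

lemma zero : IsSymbol n m w fun _ ↦ (0 : X) := by
  induction n generalizing m with
  | zero => exact isBigO_zero _ _
  | succ n ih =>
    exact ⟨isBigO_zero _ _, _, _, fun p ↦ (hasFDerivAt_const _ p).congr_fderiv (by ext <;> simp),
      ih, ih⟩

lemma const (c : X) : IsSymbol n 0 0 fun _ ↦ c := by
  have hb : (fun _ : ℝ × ℝ ↦ c) =O[𝓟 {p | 0 ≤ p.1}] symbolWeight 0 0 :=
    .of_bound ‖c‖ (.of_forall fun p ↦ by simp [symbolWeight])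
  cases n with
  | zero => exact hb
  | succ n =>
    exact ⟨hb, _, _, fun p ↦ (hasFDerivAt_const _ p).congr_fderiv (by ext <;> simp), zero, zero⟩

lemma add {f g : ℝ × ℝ → X} (hf : IsSymbol n m w f) (hg : IsSymbol n m w g) :
    IsSymbol n m w fun p ↦ f p + g p := by
  induction n generalizing f g m with
  | zero => exact IsBigO.add hf hg
  | succ n ih =>
    obtain ⟨hfb, fs, fl, hfd, hfs, hfl⟩ := hf
    obtain ⟨hgb, gs, gl, hgd, hgs, hgl⟩ := hg
    refine ⟨hfb.add hgb, _, _, fun p ↦ ((hfd p).add (hgd p)).congr_fderiv ?_,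
      ih hfs hgs, ih hfl hgl⟩
    ext <;> simp

lemma clm (L : X →L[ℝ] Y) {f : ℝ × ℝ → X} (hf : IsSymbol n m w f) :
    IsSymbol n m w fun p ↦ L (f p) := by
  induction n generalizing f m with
  | zero => exact (L.isBigO_comp f _).trans hf
  | succ n ih =>
    obtain ⟨hb, fs, fl, hd, hs, hl⟩ := hf
    refine ⟨(L.isBigO_comp f _).trans hb, _, _,
      fun p ↦ (L.hasFDerivAt.comp p (hd p)).congr_fderiv ?_, ih hs, ih hl⟩
    ext <;> simp

lemma isBigO_bilin (B : X →L[ℝ] Y →L[ℝ] Z) {f : ℝ × ℝ → X} {g : ℝ × ℝ → Y}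
    (hf : IsSymbol n m w f) (hg : IsSymbol n m' w' g) :
    (fun p ↦ B (f p) (g p)) =O[𝓟 {p | 0 ≤ p.1}] symbolWeight (m + m') (w + w') :=
  (B.isBoundedBilinearMap.isBigO_comp.trans
    (hf.isBigO.norm_left.mul hg.isBigO.norm_left)).congr_right fun _ ↦ symbolWeight_mul ..

lemma bilin (B : X →L[ℝ] Y →L[ℝ] Z) {f : ℝ × ℝ → X} {g : ℝ × ℝ → Y} (hf : IsSymbol n m w f)
    (hg : IsSymbol n m' w' g) : IsSymbol n (m + m') (w + w') fun p ↦ B (f p) (g p) := by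
  induction n generalizing f g m m' with
  | zero => exact isBigO_bilin B hf hg
  | succ n ih =>
    have hf₀ := hf.of_succ
    have hg₀ := hg.of_succ
    have hbound := isBigO_bilin B hf hg
    obtain ⟨-, fs, fl, hfd, hfs, hfl⟩ := hf
    obtain ⟨-, gs, gl, hgd, hgs, hgl⟩ := hg
    refine ⟨hbound, _, _, fun p ↦ (B.hasFDerivAt_of_bilinear (hfd p) (hgd p)).congr_fderiv ?_,
      (ih hfs hg₀).add (ih hf₀ hgs),
      ((ih hfl hg₀).mono (by linarith) le_rfl).add ((ih hf₀ hgl).mono (by linarith) le_rfl)⟩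
    ext <;> simp [add_comm]

lemma smul {f : ℝ × ℝ → ℝ} {g : ℝ × ℝ → X} (hf : IsSymbol n m w f) (hg : IsSymbol n m' w' g) :
    IsSymbol n (m + m') (w + w') fun p ↦ f p • g p :=
  bilin (ContinuousLinearMap.lsmul ℝ ℝ) hf hg

lemma mul {A : Type*} [NormedRing A] [NormedAlgebra ℝ A] {f g : ℝ × ℝ → A}
    (hf : IsSymbol n m w f) (hg : IsSymbol n m' w' g) :
    IsSymbol n (m + m') (w + w') fun p ↦ f p * g p :=
  bilin (ContinuousLinearMap.mul ℝ A) hf hg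

lemma contDiff {f : ℝ × ℝ → X} (hf : IsSymbol (n + 1) m w f) : ContDiff ℝ n f := by
  induction n generalizing f m with
  | zero =>
    obtain ⟨-, _, _, hd, -⟩ := hf
    exact contDiff_zero.mpr (continuous_iff_continuousAt.mpr fun p ↦ (hd p).continuousAt)
  | succ n ih =>
    obtain ⟨-, fs, fl, hd, hs, hl⟩ := hf
    exact contDiff_succ_iff_hasFDerivAt.mpr ⟨_, contDiff_ofPartials (ih hs) (ih hl), hd⟩

lemma iteratedDeriv_fst {f : ℝ × ℝ → X} (k : ℕ) (hf : IsSymbol (n + k) m w f) :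
    IsSymbol n m w fun p ↦ iteratedDeriv k (fun s ↦ f (s, p.2)) p.1 := by
  induction k generalizing f with
  | zero => simpa only [iteratedDeriv_zero, Prod.mk.eta, add_zero] using hf
  | succ k ih =>
    obtain ⟨-, fs, _, hd, hs, -⟩ := hf
    have hderiv (l : ℝ) : deriv (fun s ↦ f (s, l)) = fun s ↦ fs (s, l) :=
      funext fun s ↦ (hasDerivAt_partial_fst (hd (s, l))).deriv
    simpa only [iteratedDeriv_succ', hderiv] using ih hs

lemma iteratedDeriv_snd {f : ℝ × ℝ → X} (k : ℕ) (hf : IsSymbol (n + k) m w f) :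
    IsSymbol n (m - k) w fun p ↦ iteratedDeriv k (fun l ↦ f (p.1, l)) p.2 := by
  induction k generalizing f m with
  | zero => simpa only [iteratedDeriv_zero, Prod.mk.eta, Nat.cast_zero, sub_zero, add_zero] using hf
  | succ k ih =>
    obtain ⟨-, _, fl, hd, -, hl⟩ := hf
    have hderiv (s : ℝ) : deriv (fun l ↦ f (s, l)) = fun l ↦ fl (s, l) :=
      funext fun l ↦ (hasDerivAt_partial_snd (hd (s, l))).deriv
    simp only [iteratedDeriv_succ', hderiv]
    exact (ih hl).mono (by push_cast; linarith) le_rfl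

lemma exists_norm_le {f : ℝ × ℝ → X} (hf : IsSymbol n m w f) :
    ∃ C, ∀ l s, 0 ≤ s → ‖f (s, l)‖ ≤ C * mu l ^ m * exp (-w * s) := by
  obtain ⟨C, hC⟩ := isBigO_principal.mp hf.isBigO
  refine ⟨C, fun l s hs ↦ (hC (s, l) hs).trans_eq ?_⟩
  rw [norm_of_nonneg (symbolWeight_nonneg ..), symbolWeight, mul_assoc]

lemma snd : IsSymbol n 1 0 fun p ↦ p.2 := by
  have hb : (fun p : ℝ × ℝ ↦ p.2) =O[𝓟 {p | 0 ≤ p.1}] symbolWeight 1 0 :=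
    .of_bound 1 (.of_forall fun p ↦ by
      simpa [symbolWeight, abs_of_pos (mu_pos _)] using abs_le_mu p.2)
  cases n with
  | zero => exact hb
  | succ n =>
    exact ⟨hb, _, _, fun p ↦ hasFDerivAt_comp_snd (hasDerivAt_id p.2), zero,
      (const 1).mono (sub_self 1).ge le_rfl⟩

lemma mu_rpow (m : ℝ) : IsSymbol n m 0 fun p ↦ mu p.2 ^ m := by
  have hb (m : ℝ) : (fun p : ℝ × ℝ ↦ mu p.2 ^ m) =O[𝓟 {p | 0 ≤ p.1}] symbolWeight m 0 :=
    .of_bound 1 (.of_forall fun p ↦ by simp [symbolWeight])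
  induction n generalizing m with
  | zero => exact hb m
  | succ n ih =>
    have hderiv (l : ℝ) : HasDerivAt (fun l ↦ mu l ^ m) (m • l • mu l ^ (m - 2)) l := by
      refine ((hasDerivAt_mu l).rpow_const (p := m) (.inl (mu_pos _).ne')).congr_deriv ?_
      rw [show m - 1 = m - 2 + 1 by ring, rpow_add_one (mu_pos _).ne', smul_eq_mul, smul_eq_mul]
      field_simp [(mu_pos l).ne']
    exact ⟨hb m, _, _, fun p ↦ hasFDerivAt_comp_snd (hderiv p.2), zero,
      ((snd.smul (ih (m - 2))).mono (by linarith) (by simp)).clm (m • .id ℝ ℝ)⟩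

lemma ringInverse {A : Type*} [NormedRing A] [NormedAlgebra ℝ A] [HasSummableGeomSeries A]
    {f : ℝ × ℝ → A} (hu : ∀ p, IsUnit (f p))
    (hb : (fun p ↦ Ring.inverse (f p)) =O[𝓟 {p | 0 ≤ p.1}] symbolWeight 0 0)
    (hf : IsSymbol n 0 0 f) : IsSymbol n 0 0 fun p ↦ Ring.inverse (f p) := by
  induction n with
  | zero => exact hb
  | succ n ih =>
    have hR := ih hf.of_succ
    obtain ⟨-, fs, fl, hd, hs, hl⟩ := hf
    refine ⟨hb, fun p ↦ -(Ring.inverse (f p) * fs p * Ring.inverse (f p)),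
      fun p ↦ -(Ring.inverse (f p) * fl p * Ring.inverse (f p)), fun p ↦ ?_,
      (((hR.mul hs).mul hR).mono (by simp) (by simp)).clm (-.id ℝ A),
      (((hR.mul hl).mul hR).mono (by simp) (by simp)).clm (-.id ℝ A)⟩
    obtain ⟨u, hu⟩ := hu p
    have hinv : HasFDerivAt Ring.inverse (-ContinuousLinearMap.mulLeftRight ℝ A ↑u⁻¹ ↑u⁻¹) (f p) :=
      hu ▸ hasFDerivAt_ringInverse u
    refine (hinv.comp p (hd p)).congr_fderiv ?_
    ext <;> simp [← hu, mul_assoc]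

end IsSymbol
end Symbols

section ExpDecay

variable {F : Type*} [NormedAddCommGroup F] [NormedSpace ℝ F] {γ : ℝ} {W W' : ℝ → F}

/-- `W` is smooth and each of its derivatives is `O(e^{-γ|x|})` on the whole line. The case
`γ = 0` says that all derivatives of `W` are bounded. -/
def HasExpDecay (γ : ℝ) (W : ℝ → F) : Prop :=
  ContDiff ℝ (⊤ : ℕ∞) W ∧ ∀ k : ℕ, ∃ C, ∀ x, ‖iteratedDeriv k W x‖ ≤ C * exp (-γ * |x|)

namespace HasExpDecay

lemma exists_norm_le (hW : HasExpDecay γ W) : ∃ C, ∀ x, ‖W x‖ ≤ C * exp (-γ * |x|) := by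
  simpa only [iteratedDeriv_zero] using hW.2 0

lemma continuous (hW : HasExpDecay γ W) : Continuous W := hW.1.continuous

lemma isBigO_atTop (hW : HasExpDecay γ W) : W =O[atTop] fun x ↦ exp (-γ * x) := by
  obtain ⟨C, hC⟩ := hW.exists_norm_le
  refine .of_bound C ((eventually_ge_atTop 0).mono fun x hx ↦ ?_)
  simpa [abs_of_nonneg hx] using hC x

lemma isBigO_atBot (hW : HasExpDecay γ W) : W =O[atBot] fun x ↦ exp (γ * x) := by
  obtain ⟨C, hC⟩ := hW.exists_norm_le
  refine .of_bound C ((eventually_le_atBot 0).mono fun x hx ↦ ?_)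
  simpa [abs_of_nonpos hx] using hC x

lemma integrable (hγ : 0 < γ) (hW : HasExpDecay γ W) : Integrable W :=
  hW.continuous.locallyIntegrable.integrable_of_isBigO_atBot_atTop
    hW.isBigO_atBot ⟨_, Iic_mem_atBot 0, integrableOn_exp_mul_Iic hγ 0⟩
    hW.isBigO_atTop ⟨_, Ioi_mem_atTop 0, exp_neg_integrableOn_Ioi 0 hγ⟩

lemma hasDerivAt (hW : HasExpDecay γ W) (x : ℝ) : HasDerivAt W (deriv W x) x :=
  (hW.1.differentiable (by simp) x).hasDerivAt

lemma deriv (hW : HasExpDecay γ W) : HasExpDecay γ (deriv W) :=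
  ⟨(contDiff_infty_iff_deriv.mp hW.1).2,
    fun k ↦ by simpa only [iteratedDeriv_succ'] using hW.2 (k + 1)⟩

lemma add (hW : HasExpDecay γ W) (hW' : HasExpDecay γ W') : HasExpDecay γ (W + W') := by
  refine ⟨hW.1.add hW'.1, fun k ↦ ?_⟩
  obtain ⟨C, hC⟩ := hW.2 k
  obtain ⟨C', hC'⟩ := hW'.2 k
  refine ⟨C + C', fun x ↦ ?_⟩
  rw [iteratedDeriv_add (hW.1.contDiffAt.of_le (mod_cast le_top))
    (hW'.1.contDiffAt.of_le (mod_cast le_top)), add_mul]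
  exact norm_add_le_of_le (hC x) (hC' x)

lemma smul_const {V : ℝ → ℝ} (hV : HasExpDecay γ V) (c : F) :
    HasExpDecay γ fun x ↦ V x • c := by
  refine ⟨hV.1.smul contDiff_const, fun k ↦ ?_⟩
  obtain ⟨C, hC⟩ := hV.2 k
  refine ⟨C * ‖c‖, fun x ↦ ?_⟩
  rw [iteratedDeriv_smul_const (hV.1.contDiffAt.of_le (mod_cast le_top)), norm_smul,
    mul_right_comm]
  gcongr
  exact hC x

lemma const (c : F) : HasExpDecay 0 fun _ ↦ c :=
  ⟨contDiff_const, fun k ↦ ⟨‖c‖, fun x ↦ by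
    rw [iteratedDeriv_const]
    split_ifs <;> simp⟩⟩

end HasExpDecay

/-- The `j`-th derivative of `sinc x = ∫₀¹ cos (xu) du`, differentiated under the integral. -/
def cosMoment (j : ℕ) (x : ℝ) : ℝ := ∫ u in (0 : ℝ)..1, u ^ j * iteratedDeriv j cos (x * u)

lemma abs_pow_mul_iteratedDeriv_cos_le_one (j k : ℕ) (x : ℝ) {u : ℝ} (hu : u ∈ Set.uIoc 0 1) :
    |u ^ j * iteratedDeriv k cos x| ≤ 1 := by
  rw [Set.uIoc_of_le zero_le_one] at hu
  rw [abs_mul, abs_pow, abs_of_pos hu.1]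
  exact mul_le_one₀ (pow_le_one₀ hu.1.le hu.2) (abs_nonneg _) (abs_iteratedDeriv_cos_le_one k x)

lemma abs_cosMoment_le_one (j : ℕ) (x : ℝ) : |cosMoment j x| ≤ 1 := by
  simpa [cosMoment] using intervalIntegral.norm_integral_le_of_norm_le_const (C := 1)
    (f := fun u ↦ u ^ j * iteratedDeriv j cos (x * u))
    fun u hu ↦ abs_pow_mul_iteratedDeriv_cos_le_one j j (x * u) hu

lemma hasDerivAt_cosMoment (j : ℕ) (x : ℝ) :
    HasDerivAt (cosMoment j) (cosMoment (j + 1) x) x := by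
  have (i : ℕ) : Continuous (iteratedDeriv i cos) := contDiff_cos.continuous_iteratedDeriv' i
  have hderiv (u y : ℝ) : HasDerivAt (fun y ↦ u ^ j * iteratedDeriv j cos (y * u))
      (u ^ (j + 1) * iteratedDeriv (j + 1) cos (y * u)) y := by
    have hcos : HasDerivAt (iteratedDeriv j cos) (iteratedDeriv (j + 1) cos (y * u)) (y * u) := by
      rw [iteratedDeriv_succ]
      exact (contDiff_cos.differentiable_iteratedDeriv' j _).hasDerivAt
    exact ((hcos.comp y (hasDerivAt_mul_const u)).const_mul (u ^ j)).congr_deriv (by ring)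
  exact (intervalIntegral.hasDerivAt_integral_of_dominated_loc_of_deriv_le univ_mem
    (.of_forall fun y ↦ (by fun_prop : Continuous _).aestronglyMeasurable)
    ((by fun_prop : Continuous _).intervalIntegrable _ _)
    (by fun_prop : Continuous _).aestronglyMeasurable
    (.of_forall fun u hu y _ ↦ abs_pow_mul_iteratedDeriv_cos_le_one _ _ (y * u) hu)
    (continuous_const.intervalIntegrable _ _)
    (.of_forall fun u _ y _ ↦ hderiv u y)).2

lemma sinc_eq_cosMoment : sinc = cosMoment 0 := by
  ext x
  simp only [cosMoment, pow_zero, iteratedDeriv_zero, one_mul]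
  rcases eq_or_ne x 0 with rfl | hx
  · simp
  · simp [intervalIntegral.integral_comp_mul_left (fun y ↦ cos y) hx, sinc_of_ne_zero hx,
      div_eq_inv_mul]

lemma iteratedDeriv_sinc (k : ℕ) : iteratedDeriv k sinc = cosMoment k := by
  induction k with
  | zero => rw [iteratedDeriv_zero, sinc_eq_cosMoment]
  | succ k ih => rw [iteratedDeriv_succ, ih, funext fun x ↦ (hasDerivAt_cosMoment k x).deriv]

lemma hasExpDecay_sinc : HasExpDecay 0 sinc := by
  refine ⟨contDiff_of_differentiable_iteratedDeriv fun k _ x ↦ ?_, fun k ↦ ⟨1, fun x ↦ ?_⟩⟩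
  · rw [iteratedDeriv_sinc]
    exact (hasDerivAt_cosMoment k x).differentiableAt
  · simpa [iteratedDeriv_sinc] using abs_cosMoment_le_one k x

end ExpDecay

section BoundedFamilies

variable {Z F : Type*} [TopologicalSpace Z] [NormedAddCommGroup F] [NormedSpace ℝ F]
  {f g : ℝ → Z →ᵇ F}

lemma continuous_of_forall_hasDerivAt_apply
    (hf : ∀ z r, HasDerivAt (fun r ↦ f r z) (g r z) r)
    (hg : ∀ r, g =O[𝓝 r] fun _ ↦ (1 : ℝ)) : Continuous f := by
  refine continuous_iff_continuousAt.mpr fun r ↦ ?_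
  obtain ⟨C, hC⟩ := (hg r).bound
  obtain ⟨ε, hε, hball⟩ := Metric.eventually_nhds_iff_ball.mp hC
  have hlip : ∀ᶠ x in 𝓝 r, dist (f x) (f r) ≤ C * dist x r := by
    filter_upwards [Metric.ball_mem_nhds r hε] with x hx
    have hC0 : 0 ≤ C := by simpa using (norm_nonneg _).trans (hball x hx)
    refine (BoundedContinuousFunction.dist_le (by positivity)).mpr fun z ↦ ?_
    simpa only [dist_eq_norm] using
      (convex_ball r ε).norm_image_sub_le_of_norm_hasDerivWithin_le (C := C)
      (fun y _ ↦ (hf z y).hasDerivWithinAt)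
      (fun y hy ↦ ((g y).norm_coe_le_norm z).trans (by simpa using hball y hy))
      (Metric.mem_ball_self hε) hx
  refine tendsto_iff_dist_tendsto_zero.mpr (squeeze_zero' (.of_forall fun _ ↦ dist_nonneg) hlip ?_)
  have : Tendsto (fun x ↦ C * dist x r) (𝓝 r) (𝓝 (C * dist r r)) := by
    apply Continuous.tendsto; fun_prop
  simpa using this

lemma hasDerivAt_of_forall_hasDerivAt_apply
    (hf : ∀ z r, HasDerivAt (fun r ↦ f r z) (g r z) r) (hg : Continuous g) (r : ℝ) :
    HasDerivAt f (g r) r := by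
  refine hasDerivAt_iff_isLittleO.mpr (isLittleO_iff.mpr fun ε hε ↦ ?_)
  obtain ⟨δ, hδ, hball⟩ := Metric.continuous_iff.mp hg r ε hε
  filter_upwards [Metric.ball_mem_nhds r hδ] with x hx
  refine (BoundedContinuousFunction.norm_le (by positivity)).mpr fun z ↦ ?_
  have hder (y : ℝ) : HasDerivAt (fun y ↦ f y z - y • g r z) (g y z - g r z) y := by
    simpa using (hf z y).fun_sub ((hasDerivAt_id y).smul_const (g r z))
  have hle := (convex_ball r δ).norm_image_sub_le_of_norm_hasDerivWithin_le
      (fun y _ ↦ (hder y).hasDerivWithinAt)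
      (fun y hy ↦ ((g y - g r).norm_coe_le_norm z).trans
        (by simpa [dist_eq_norm] using (hball y hy).le))
      (Metric.mem_ball_self hδ) hx
  simpa [sub_smul, sub_sub_sub_comm] using hle

end BoundedFamilies

section KernelSymbols

variable {F : Type*} [NormedAddCommGroup F] [NormedSpace ℝ F] {γ : ℝ} {W : ℝ → F} {n : ℕ}

lemma exists_norm_exp_smul_shift_le (hγ : 0 ≤ γ) (hW : HasExpDecay γ W) :
    ∃ C, ∀ (s : ℝ) (z : ℝ≥0 × ℝ≥0),
      ‖exp (γ * z.2) • W (s + z.1 + z.2)‖ ≤ C * exp (-γ * s) := by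
  obtain ⟨C, hC⟩ := hW.exists_norm_le
  have hC₀ : 0 ≤ C := by simpa using (norm_nonneg _).trans (hC 0)
  refine ⟨C, fun s z ↦ ?_⟩
  have hexp : γ * z.2 + -γ * |s + z.1 + z.2| ≤ -γ * s := by
    nlinarith [mul_le_mul_of_nonneg_left (le_abs_self (s + z.1 + z.2)) hγ,
      mul_nonneg hγ z.1.coe_nonneg]
  calc ‖exp (γ * z.2) • W (s + z.1 + z.2)‖
      ≤ exp (γ * z.2) * (C * exp (-γ * |s + z.1 + z.2|)) := by
        rw [norm_smul, norm_of_nonneg (exp_pos _).le]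
        gcongr
        exact hC _
    _ = C * exp (γ * z.2 + -γ * |s + z.1 + z.2|) := by rw [Real.exp_add]; ring
    _ ≤ C * exp (-γ * s) := by gcongr

/-- The weighted translate `(x, t) ↦ e^{γt} W(s + x + t)` of `W`, which is bounded on the quarter
plane. -/
def weightedShift (hγ : 0 ≤ γ) (hW : HasExpDecay γ W) (s : ℝ) : ℝ≥0 × ℝ≥0 →ᵇ F :=
  .ofNormedAddCommGroup (fun z ↦ exp (γ * z.2) • W (s + z.1 + z.2))
    (by have := hW.continuous; fun_prop) _
    (Classical.choose_spec (exists_norm_exp_smul_shift_le hγ hW) s)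

@[simp]
lemma weightedShift_apply (hγ : 0 ≤ γ) (hW : HasExpDecay γ W) (s : ℝ) (z : ℝ≥0 × ℝ≥0) :
    weightedShift hγ hW s z = exp (γ * z.2) • W (s + z.1 + z.2) := rfl

lemma exists_norm_weightedShift_le (hγ : 0 ≤ γ) (hW : HasExpDecay γ W) :
    ∃ C, ∀ s, ‖weightedShift hγ hW s‖ ≤ C * exp (-γ * s) := by
  obtain ⟨C, hC⟩ := exists_norm_exp_smul_shift_le hγ hW
  exact ⟨C, fun s ↦ (BoundedContinuousFunction.norm_le ((norm_nonneg _).trans (hC s 0))).mpr (hC s)⟩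

lemma hasDerivAt_weightedShift_apply (hγ : 0 ≤ γ) (hW : HasExpDecay γ W) (z : ℝ≥0 × ℝ≥0) (s : ℝ) :
    HasDerivAt (fun s ↦ weightedShift hγ hW s z) (weightedShift hγ hW.deriv s z) s := by
  simpa [add_assoc] using ((hW.hasDerivAt (s + (z.1 + z.2))).comp_add_const s _).fun_const_smul
    (exp (γ * z.2))

lemma continuous_weightedShift (hγ : 0 ≤ γ) (hW : HasExpDecay γ W) :
    Continuous (weightedShift hγ hW) := by
  refine continuous_of_forall_hasDerivAt_apply (hasDerivAt_weightedShift_apply hγ hW) fun r ↦ ?_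
  obtain ⟨C, hC⟩ := exists_norm_weightedShift_le hγ hW.deriv
  have hexp : (fun s ↦ C * exp (-γ * s)) =O[𝓝 r] fun _ ↦ (1 : ℝ) :=
    ((by fun_prop : Continuous fun s ↦ C * exp (-γ * s)).tendsto r).isBigO_one ℝ
  exact (IsBigO.of_norm_le hC).trans hexp

lemma isSymbol_weightedShift (hγ : 0 ≤ γ) (hW : HasExpDecay γ W) :
    IsSymbol n 0 γ fun p ↦ weightedShift hγ hW p.1 := by
  have hbound {W : ℝ → F} (hW : HasExpDecay γ W) :
      (fun p : ℝ × ℝ ↦ weightedShift hγ hW p.1) =O[𝓟 {p | 0 ≤ p.1}] symbolWeight 0 γ := by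
    obtain ⟨C, hC⟩ := exists_norm_weightedShift_le hγ hW
    exact .of_bound C (.of_forall fun p ↦ by simpa [symbolWeight] using hC p.1)
  induction n generalizing W with
  | zero => exact hbound hW
  | succ n ih =>
    exact ⟨hbound hW, _, _, fun p ↦ hasFDerivAt_comp_fst (hasDerivAt_of_forall_hasDerivAt_apply
      (hasDerivAt_weightedShift_apply hγ hW) (continuous_weightedShift hγ hW.deriv) p.1),
      ih hW.deriv, .zero⟩

variable {c : ℝ} {q : ℝ → ℝ} {a : ℕ}

lemma pow_mul_exp_neg_le (a : ℕ) {c t m : ℝ} (hc : 0 < c) (ht : 0 ≤ t) (hm : 0 < m) :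
    t ^ a * exp (-(c * m * t)) ≤ a.factorial / c ^ a * m ^ (-(a : ℝ)) := by
  have h := pow_div_factorial_le_exp (c * m * t) (by positivity) a
  rw [div_le_iff₀ (by positivity), mul_pow, mul_pow] at h
  rw [rpow_neg hm.le, rpow_natCast, Real.exp_neg, ← div_eq_mul_inv, ← div_eq_mul_inv, div_div,
    div_le_div_iff₀ (exp_pos _) (by positivity)]
  linarith

lemma exists_norm_pow_mul_exp_mul_le (a : ℕ) (hc : 0 < c) (hq : HasExpDecay 0 q) :
    ∃ C, ∀ (l : ℝ) (z : ℝ≥0 × ℝ≥0),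
      ‖(z.2 : ℝ) ^ a * exp (-(c * mu l * z.2)) * q (z.2 * l)‖ ≤ C * mu l ^ (-(a : ℝ)) := by
  obtain ⟨D, hD⟩ := hq.exists_norm_le
  refine ⟨a.factorial / c ^ a * D, fun l z ↦ ?_⟩
  rw [norm_mul, norm_of_nonneg (by positivity), mul_right_comm _ D]
  exact mul_le_mul (pow_mul_exp_neg_le a hc z.2.coe_nonneg (mu_pos l)) (by simpa using hD (z.2 * l))
    (norm_nonneg _) (mul_nonneg (by positivity) (rpow_nonneg (mu_pos l).le _))

/-- The function `(x, t) ↦ t^a e^{-cμ(λ)t} q(tλ)` on the quarter plane. -/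
def dampedKernel (a : ℕ) (hc : 0 < c) (hq : HasExpDecay 0 q) (l : ℝ) : ℝ≥0 × ℝ≥0 →ᵇ ℝ :=
  .ofNormedAddCommGroup (fun z ↦ (z.2 : ℝ) ^ a * exp (-(c * mu l * z.2)) * q (z.2 * l))
    (by have := hq.continuous; fun_prop) _
    (Classical.choose_spec (exists_norm_pow_mul_exp_mul_le a hc hq) l)

@[simp]
lemma dampedKernel_apply (hc : 0 < c) (hq : HasExpDecay 0 q) (l : ℝ) (z : ℝ≥0 × ℝ≥0) :
    dampedKernel a hc hq l z = (z.2 : ℝ) ^ a * exp (-(c * mu l * z.2)) * q (z.2 * l) := rfl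

lemma exists_norm_dampedKernel_le (a : ℕ) (hc : 0 < c) (hq : HasExpDecay 0 q) :
    ∃ C, ∀ l, ‖dampedKernel a hc hq l‖ ≤ C * mu l ^ (-(a : ℝ)) := by
  obtain ⟨C, hC⟩ := exists_norm_pow_mul_exp_mul_le a hc hq
  exact ⟨C, fun l ↦ (BoundedContinuousFunction.norm_le ((norm_nonneg _).trans (hC l 0))).mpr (hC l)⟩

/-- The derivative of `dampedKernel a hc hq` with respect to `λ`. -/
def dampedKernelDeriv (a : ℕ) (hc : 0 < c) (hq : HasExpDecay 0 q) (l : ℝ) : ℝ≥0 × ℝ≥0 →ᵇ ℝ :=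
  (-c) • (l • mu l ^ (-1 : ℝ)) • dampedKernel (a + 1) hc hq l + dampedKernel (a + 1) hc hq.deriv l

lemma hasDerivAt_dampedKernel_apply (hc : 0 < c) (hq : HasExpDecay 0 q) (z : ℝ≥0 × ℝ≥0) (l : ℝ) :
    HasDerivAt (fun l ↦ dampedKernel a hc hq l z) (dampedKernelDeriv a hc hq l z) l := by
  have hexp : HasDerivAt (fun l ↦ exp (-(c * mu l * z.2)))
      (exp (-(c * mu l * z.2)) * -(c * (l / mu l) * z.2)) l :=
    (((hasDerivAt_mu l).const_mul c).mul_const _).neg.exp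
  have hq' : HasDerivAt (fun l ↦ q (z.2 * l)) (deriv q (z.2 * l) * z.2) l :=
    (hq.hasDerivAt _).comp l (hasDerivAt_const_mul _)
  refine ((hexp.const_mul _).mul hq').congr_deriv ?_
  simp only [dampedKernelDeriv, rpow_neg_one, BoundedContinuousFunction.coe_add, Pi.add_apply,
    BoundedContinuousFunction.coe_smul, dampedKernel_apply, smul_eq_mul]
  ring

lemma continuous_dampedKernel (a : ℕ) (hc : 0 < c) (hq : HasExpDecay 0 q) :
    Continuous (dampedKernel a hc hq) := by
  refine continuous_of_forall_hasDerivAt_apply (hasDerivAt_dampedKernel_apply hc hq) fun r ↦ ?_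
  have hbdd {q : ℝ → ℝ} (hq : HasExpDecay 0 q) :
      dampedKernel (a + 1) hc hq =O[𝓝 r] fun _ ↦ (1 : ℝ) := by
    obtain ⟨C, hC⟩ := exists_norm_dampedKernel_le (a + 1) hc hq
    exact (IsBigO.of_norm_le hC).trans
      (((continuous_mu_rpow _).const_mul C).tendsto r |>.isBigO_one ℝ)
  have hfactor : (fun l ↦ (-c) • l • mu l ^ (-1 : ℝ)) =O[𝓝 r] fun _ ↦ (1 : ℝ) :=
    ((continuous_id.smul (continuous_mu_rpow _)).const_smul (-c)).tendsto r |>.isBigO_one ℝ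
  exact ((hfactor.smul (hbdd hq)).congr (fun _ ↦ smul_assoc ..) (by simp)).add (hbdd hq.deriv)

lemma continuous_dampedKernelDeriv (a : ℕ) (hc : 0 < c) (hq : HasExpDecay 0 q) :
    Continuous (dampedKernelDeriv a hc hq) :=
  (((continuous_id.smul (continuous_mu_rpow _)).smul
    (continuous_dampedKernel (a + 1) hc hq)).const_smul (-c)).add
    (continuous_dampedKernel (a + 1) hc hq.deriv)

lemma isSymbol_dampedKernel (a : ℕ) (hc : 0 < c) (hq : HasExpDecay 0 q) :
    IsSymbol n (-(a : ℝ)) 0 fun p ↦ dampedKernel a hc hq p.2 := by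
  have hbound (a : ℕ) {q : ℝ → ℝ} (hq : HasExpDecay 0 q) :
      (fun p : ℝ × ℝ ↦ dampedKernel a hc hq p.2) =O[𝓟 {p | 0 ≤ p.1}] symbolWeight (-(a : ℝ)) 0 := by
    obtain ⟨C, hC⟩ := exists_norm_dampedKernel_le a hc hq
    refine .of_bound C (.of_forall fun p ↦ (hC p.2).trans_eq ?_)
    rw [norm_of_nonneg (symbolWeight_nonneg ..)]
    simp [symbolWeight]
  induction n generalizing a q with
  | zero => exact hbound a hq
  | succ n ih =>
    have hcast : -((a + 1 : ℕ) : ℝ) = -a - 1 := by push_cast; ring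
    have hfirst : IsSymbol n (-(a : ℝ) - 1) 0
        fun p ↦ (p.2 • mu p.2 ^ (-1 : ℝ)) • dampedKernel (a + 1) hc hq p.2 :=
      ((IsSymbol.snd.smul (.mu_rpow (-1))).smul (ih (a + 1) hq)).mono (by linarith) (by simp)
    exact ⟨hbound a hq, _, _, fun p ↦ hasFDerivAt_comp_snd (hasDerivAt_of_forall_hasDerivAt_apply
      (hasDerivAt_dampedKernel_apply hc hq) (continuous_dampedKernelDeriv a hc hq) p.2), .zero,
      (hfirst.clm (-c • .id ℝ _)).add (hcast ▸ ih (a + 1) hq.deriv)⟩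

end KernelSymbols

section VolterraOperator

variable {E : Type*} [NormedAddCommGroup E] [NormedSpace ℝ E] {γ : ℝ}

lemma norm_exp_smul_kernel_le (γ : ℝ) (k : ℝ≥0 × ℝ≥0 →ᵇ E →L[ℝ] E) (h : ℝ≥0 →ᵇ E) (x : ℝ≥0)
    (t : ℝ) : ‖exp (-γ * t) • k (x, t.toNNReal) (h (x + t.toNNReal))‖ ≤
      exp (-γ * t) * (‖k‖ * ‖h‖) := by
  rw [norm_smul, norm_of_nonneg (exp_pos _).le]
  gcongr
  exact (k (x, t.toNNReal)).le_of_opNorm_le_of_le (k.norm_coe_le_norm _) (h.norm_coe_le_norm _)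

lemma integrableOn_exp_smul_kernel (hγ : 0 < γ) (k : ℝ≥0 × ℝ≥0 →ᵇ E →L[ℝ] E) (h : ℝ≥0 →ᵇ E)
    (x : ℝ≥0) : IntegrableOn (fun t ↦ exp (-γ * t) • k (x, t.toNNReal) (h (x + t.toNNReal)))
      (Set.Ioi 0) :=
  ((exp_neg_integrableOn_Ioi 0 hγ).mul_const _).mono'
    (by fun_prop : Continuous _).aestronglyMeasurable
    (.of_forall (norm_exp_smul_kernel_le γ k h x))

lemma norm_integral_exp_smul_kernel_le (hγ : 0 < γ) (k : ℝ≥0 × ℝ≥0 →ᵇ E →L[ℝ] E)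
    (h : ℝ≥0 →ᵇ E) (x : ℝ≥0) :
    ‖∫ t in Set.Ioi 0, exp (-γ * t) • k (x, t.toNNReal) (h (x + t.toNNReal))‖ ≤
      γ⁻¹ * ‖k‖ * ‖h‖ := by
  refine (norm_integral_le_of_norm_le ((exp_neg_integrableOn_Ioi 0 hγ).mul_const _)
    (.of_forall (norm_exp_smul_kernel_le γ k h x))).trans_eq ?_
  rw [integral_mul_const, integral_exp_mul_Ioi (neg_lt_zero.mpr hγ)]
  simp [mul_assoc]

/-- The function `x ↦ ∫₀^∞ e^{-γt} k(x, t) h(x + t) dt`. -/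
def volterraFun (hγ : 0 < γ) (k : ℝ≥0 × ℝ≥0 →ᵇ E →L[ℝ] E) (h : ℝ≥0 →ᵇ E) : ℝ≥0 →ᵇ E :=
  .ofNormedAddCommGroup
    (fun x ↦ ∫ t in Set.Ioi 0, exp (-γ * t) • k (x, t.toNNReal) (h (x + t.toNNReal)))
    (continuous_of_dominated
      (fun x ↦ (integrableOn_exp_smul_kernel hγ k h x).aestronglyMeasurable)
      (fun x ↦ .of_forall (norm_exp_smul_kernel_le γ k h x))
      ((exp_neg_integrableOn_Ioi 0 hγ).mul_const _)
      (.of_forall fun t ↦ by fun_prop))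
    _ (norm_integral_exp_smul_kernel_le hγ k h)

lemma volterraFun_apply (hγ : 0 < γ) (k : ℝ≥0 × ℝ≥0 →ᵇ E →L[ℝ] E) (h : ℝ≥0 →ᵇ E) (x : ℝ≥0) :
    volterraFun hγ k h x =
      ∫ t in Set.Ioi 0, exp (-γ * t) • k (x, t.toNNReal) (h (x + t.toNNReal)) := rfl

/-- The operator with kernel `e^{-γt} k(x, t)`, as a bounded bilinear function of `k` and of the
function it acts on. -/
def volterra (hγ : 0 < γ) : (ℝ≥0 × ℝ≥0 →ᵇ E →L[ℝ] E) →L[ℝ] (ℝ≥0 →ᵇ E) →L[ℝ] (ℝ≥0 →ᵇ E) :=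
  LinearMap.mkContinuous₂ (LinearMap.mk₂ ℝ (volterraFun (E := E) hγ)
    (fun k k' h ↦ by
      ext x
      simpa [volterraFun_apply] using integral_add (integrableOn_exp_smul_kernel hγ k h x)
        (integrableOn_exp_smul_kernel hγ k' h x))
    (fun c k h ↦ by
      ext x
      simp [volterraFun_apply, smul_comm _ c, integral_smul])
    (fun k h h' ↦ by
      ext x
      simpa [volterraFun_apply] using integral_add (integrableOn_exp_smul_kernel hγ k h x)
        (integrableOn_exp_smul_kernel hγ k h' x))
    (fun c k h ↦ by
      ext x
      simp [volterraFun_apply, smul_comm _ c, integral_smul])) γ⁻¹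
    fun k h ↦ BoundedContinuousFunction.norm_ofNormedAddCommGroup_le _ (by positivity)
      (norm_integral_exp_smul_kernel_le hγ k h)

lemma hasDerivAt_integral_Ioi {F : Type*} [NormedAddCommGroup F] [NormedSpace ℝ F]
    [CompleteSpace F] {φ : ℝ → F} (hφ : Continuous φ) (hi : ∀ x, IntegrableOn φ (Set.Ioi x))
    (x : ℝ) : HasDerivAt (fun x ↦ ∫ t in Set.Ioi x, φ t) (-φ x) x := by
  have heq : (fun x ↦ ∫ t in Set.Ioi x, φ t) =
      fun x ↦ (∫ t in Set.Ioi 0, φ t) - ∫ t in (0 : ℝ)..x, φ t := funext fun x ↦ by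
    rw [← intervalIntegral.integral_Ioi_sub_Ioi' (hi 0) (hi x), sub_sub_cancel]
  rw [heq]
  exact (hφ.integral_hasStrictDerivAt 0 x).hasDerivAt.const_sub _

lemma norm_pow_apply_le_integral_pow {φ : ℝ → ℝ} (hφ : Continuous φ) (hφ₀ : ∀ x, 0 ≤ φ x)
    (hi : Integrable φ) {T : (ℝ≥0 →ᵇ E) →L[ℝ] (ℝ≥0 →ᵇ E)}
    (hT : ∀ h x, ‖T h x‖ ≤ ∫ t in Set.Ioi 0, φ (x + t) * ‖h (x + t.toNNReal)‖)
    (n : ℕ) (h : ℝ≥0 →ᵇ E) (x : ℝ≥0) :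
    ‖(T ^ n) h x‖ ≤ (∫ t in Set.Ioi (x : ℝ), φ t) ^ n / n.factorial * ‖h‖ := by
  set Φ : ℝ → ℝ := fun x ↦ ∫ t in Set.Ioi x, φ t
  have hΦ₀ (x : ℝ) : 0 ≤ Φ x := integral_nonneg fun t ↦ hφ₀ t
  induction n generalizing x with
  | zero => simpa using h.norm_coe_le_norm x
  | succ n ih =>
    -- The induction closes because `φ Φⁿ / n!` is minus the derivative of `Φⁿ⁺¹ / (n + 1)!`.
    set G : ℝ → ℝ := fun t ↦ -(Φ (x + t) ^ (n + 1) / (n + 1).factorial * ‖h‖)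
    set G' : ℝ → ℝ := fun t ↦ φ (x + t) * (Φ (x + t) ^ n / n.factorial * ‖h‖)
    have hG : ∀ t ∈ Set.Ici (0 : ℝ), HasDerivAt G (G' t) t := fun t _ ↦ by
      have hΦ : HasDerivAt (fun t ↦ Φ (x + t)) (-φ (x + t)) t :=
        (hasDerivAt_integral_Ioi hφ (fun _ ↦ hi.integrableOn) (x + t)).comp_const_add (x : ℝ) t
      refine (((hΦ.pow (n + 1)).div_const _).mul_const _).neg.congr_deriv ?_
      simp only [G', Nat.factorial_succ]
      push_cast
      field_simp
    have hG'₀ : ∀ t ∈ Set.Ioi (0 : ℝ), 0 ≤ G' t := fun t _ ↦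
      mul_nonneg (hφ₀ _) (by have := hΦ₀ (x + t); positivity)
    have hlim : Tendsto G atTop (𝓝 0) := by
      have h₁ : Tendsto (fun t ↦ Φ (x + t)) atTop (𝓝 0) :=
        tendsto_integral_Ioi_zero (tendsto_atTop_add_const_left _ _ tendsto_id)
      simpa [G] using (((h₁.pow (n + 1)).div_const ((n + 1).factorial : ℝ)).mul_const ‖h‖).neg
    calc ‖(T ^ (n + 1)) h x‖
        ≤ ∫ t in Set.Ioi 0, φ (x + t) * ‖(T ^ n) h (x + t.toNNReal)‖ := by
          rw [pow_succ']
          exact hT _ x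
      _ ≤ ∫ t in Set.Ioi 0, G' t := by
          refine integral_mono_of_nonneg (.of_forall fun t ↦ mul_nonneg (hφ₀ _) (norm_nonneg _))
            (integrableOn_Ioi_deriv_of_nonneg' hG hG'₀ hlim)
            ((ae_restrict_mem measurableSet_Ioi).mono fun t (ht : 0 < t) ↦ ?_)
          simpa [G', ht.le] using mul_le_mul_of_nonneg_left (ih (x + t.toNNReal)) (hφ₀ (x + t))
      _ = Φ x ^ (n + 1) / (n + 1).factorial * ‖h‖ := by
          rw [integral_Ioi_of_hasDerivAt_of_nonneg' hG hG'₀ hlim]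
          simp [G]

lemma isUnit_one_sub_of_norm_pow_le {A : Type*} [NormedRing A] [CompleteSpace A] {T : A} {M : ℝ}
    (hT : ∀ n : ℕ, ‖T ^ n‖ ≤ M ^ n / n.factorial) :
    IsUnit (1 - T) ∧ ‖Ring.inverse (1 - T)‖ ≤ exp M := by
  have hexp : HasSum (fun n : ℕ ↦ M ^ n / n.factorial) (exp M) := by
    rw [Real.exp_eq_exp_ℝ]
    exact NormedSpace.expSeries_div_hasSum_exp M
  have hsum : Summable fun n ↦ T ^ n := hexp.summable.of_norm_bounded hT
  let u : Aˣ := ⟨1 - T, ∑' n, T ^ n, hsum.one_sub_mul_tsum_pow, hsum.tsum_pow_mul_one_sub⟩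
  refine ⟨u.isUnit, ?_⟩
  rw [show Ring.inverse (1 - T) = ∑' n, T ^ n from Ring.inverse_unit u]
  exact tsum_of_norm_bounded hexp hT

end VolterraOperator

section VolterraEquation

variable {E : Type*} [NormedAddCommGroup E] [NormedSpace ℝ E] {γ m : ℝ}
  {W : ℝ → E →L[ℝ] E} {k : ℝ → ℝ → E →L[ℝ] E} {κ : ℝ → ℝ≥0 × ℝ≥0 →ᵇ E →L[ℝ] E}

/-- The operator `h ↦ ∫₀^∞ κ_λ(x, t) W(s + x + t) h(x + t) dt` on bounded continuous functions of
`x ≥ 0`, with the base point `s` and the spectral parameter `λ` as parameters `p = (s, λ)`. -/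
def jostOp (hγ : 0 < γ) (hW : HasExpDecay γ W) (κ : ℝ → ℝ≥0 × ℝ≥0 →ᵇ E →L[ℝ] E) (p : ℝ × ℝ) :
    (ℝ≥0 →ᵇ E) →L[ℝ] (ℝ≥0 →ᵇ E) :=
  volterra hγ (κ p.2 * weightedShift hγ.le hW p.1)

lemma jostOp_apply (hγ : 0 < γ) (hW : HasExpDecay γ W) (hk : ∀ l z, κ l z = k l z.2)
    (p : ℝ × ℝ) (h : ℝ≥0 →ᵇ E) (x : ℝ≥0) :
    jostOp hγ hW κ p h x =
      ∫ t in Set.Ioi 0, k p.2 t (W (p.1 + x + t) (h (x + t.toNNReal))) := by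
  refine setIntegral_congr_fun measurableSet_Ioi fun t (ht : 0 < t) ↦ ?_
  have hexp : exp (-(γ * t)) * exp (γ * t) = 1 := by
    rw [← Real.exp_add, neg_add_cancel, Real.exp_zero]
  simp [hk, ht.le, smul_smul, hexp]

lemma isSymbol_jostOp {n : ℕ} (hγ : 0 < γ) (hW : HasExpDecay γ W)
    (hκ : IsSymbol n m 0 fun p ↦ κ p.2) : IsSymbol n m γ (jostOp hγ hW κ) := by
  have hmul := IsSymbol.mul (A := ℝ≥0 × ℝ≥0 →ᵇ E →L[ℝ] E) hκ (isSymbol_weightedShift hγ.le hW)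
  rw [add_zero, zero_add] at hmul
  exact hmul.clm (volterra hγ)

lemma norm_jostOp_apply_le (hγ : 0 < γ) (hW : HasExpDecay γ W) (hk : ∀ l z, κ l z = k l z.2)
    {C : ℝ} (hC : ∀ l, ‖κ l‖ ≤ C) (p : ℝ × ℝ) (h : ℝ≥0 →ᵇ E) (x : ℝ≥0) :
    ‖jostOp hγ hW κ p h x‖ ≤
      ∫ t in Set.Ioi 0, C * ‖W (p.1 + (x + t))‖ * ‖h (x + t.toNNReal)‖ := by
  rw [jostOp_apply hγ hW hk]
  have hWx : Integrable fun t ↦ C * ‖W (p.1 + (x + t))‖ :=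
    (((hW.integrable hγ).comp_add_left p.1).comp_add_left (x : ℝ)).norm.const_mul C
  have hi : Integrable fun t ↦ C * ‖W (p.1 + (x + t))‖ * ‖h (x + t.toNNReal)‖ :=
    hWx.mul_bdd (c := ‖h‖) (by fun_prop : Continuous _).aestronglyMeasurable
      (.of_forall fun t ↦ by simpa using h.norm_coe_le_norm _)
  refine norm_integral_le_of_norm_le hi.integrableOn
    ((ae_restrict_mem measurableSet_Ioi).mono fun t (ht : 0 < t) ↦ ?_)
  have hkt : ‖k p.2 t‖ ≤ C := by
    simpa [hk, ht.le] using ((κ p.2).norm_coe_le_norm (0, t.toNNReal)).trans (hC p.2)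
  rw [mul_assoc C, add_assoc]
  exact (k p.2 t).le_of_opNorm_le_of_le hkt (ContinuousLinearMap.le_opNorm _ _)

lemma norm_jostOp_pow_le (hγ : 0 < γ) (hW : HasExpDecay γ W)
    (hk : ∀ l z, κ l z = k l z.2) {C : ℝ} (hC : ∀ l, ‖κ l‖ ≤ C) (p : ℝ × ℝ) (n : ℕ) :
    ‖jostOp hγ hW κ p ^ n‖ ≤ (C * ∫ y, ‖W y‖) ^ n / n.factorial := by
  have hC₀ : 0 ≤ C := (norm_nonneg (κ 0)).trans (hC 0)
  set φ : ℝ → ℝ := fun y ↦ C * ‖W (p.1 + y)‖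
  have hφ₀ (y : ℝ) : 0 ≤ φ y := by positivity
  have hφ : Continuous φ := by have := hW.continuous; fun_prop
  have hφi : Integrable φ := ((hW.integrable hγ).comp_add_left p.1).norm.const_mul C
  have hφle (x : ℝ) : ∫ t in Set.Ioi x, φ t ≤ C * ∫ y, ‖W y‖ := calc
    ∫ t in Set.Ioi x, φ t ≤ ∫ t, φ t := setIntegral_le_integral hφi (.of_forall hφ₀)
    _ = C * ∫ y, ‖W y‖ := by
      rw [integral_const_mul, integral_add_left_eq_self (fun y ↦ ‖W y‖) p.1]
  refine ContinuousLinearMap.opNorm_le_bound _ (by positivity) fun h ↦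
    (BoundedContinuousFunction.norm_le (by positivity)).mpr fun x ↦
      (norm_pow_apply_le_integral_pow hφ hφ₀ hφi (norm_jostOp_apply_le hγ hW hk hC p)
        n h x).trans ?_
  gcongr
  exact hφle x

lemma exists_norm_le_of_isSymbol_snd {X : Type*} [NormedAddCommGroup X] [NormedSpace ℝ X]
    {f : ℝ → X} {n : ℕ} (hm : m ≤ 0) (hf : IsSymbol n m 0 fun p ↦ f p.2) : ∃ C, ∀ l, ‖f l‖ ≤ C := by
  obtain ⟨C, hC⟩ := (hf.mono hm le_rfl).exists_norm_le
  exact ⟨C, fun l ↦ by simpa using hC l 0 le_rfl⟩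

/-- The bounded solution `h` of the Volterra equation `h = e + jostOp p h`. -/
def jostSolution (hγ : 0 < γ) (hW : HasExpDecay γ W) (κ : ℝ → ℝ≥0 × ℝ≥0 →ᵇ E →L[ℝ] E) (e : E)
    (p : ℝ × ℝ) : ℝ≥0 →ᵇ E :=
  Ring.inverse (1 - jostOp hγ hW κ p) (.const ℝ≥0 e)

/-- The value at `s` of the profile `g` of a Jost solution: `g(s + x, λ)` is the solution of the
Volterra equation based at `s`. -/
def jostProfile (hγ : 0 < γ) (hW : HasExpDecay γ W) (κ : ℝ → ℝ≥0 × ℝ≥0 →ᵇ E →L[ℝ] E) (e : E)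
    (p : ℝ × ℝ) : E :=
  jostSolution hγ hW κ e p 0

variable {e : E}

lemma jostSolution_eq (hγ : 0 < γ) (hW : HasExpDecay γ W) {p : ℝ × ℝ}
    (hu : IsUnit (1 - jostOp hγ hW κ p)) :
    jostSolution hγ hW κ e p = .const ℝ≥0 e + jostOp hγ hW κ p (jostSolution hγ hW κ e p) :=
  eq_add_of_sub_eq congr($(Ring.mul_inverse_cancel _ hu) (.const ℝ≥0 e))

lemma eq_jostSolution (hγ : 0 < γ) (hW : HasExpDecay γ W) {p : ℝ × ℝ}
    (hu : IsUnit (1 - jostOp hγ hW κ p)) {h : ℝ≥0 →ᵇ E}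
    (hh : h = .const ℝ≥0 e + jostOp hγ hW κ p h) : h = jostSolution hγ hW κ e p := by
  rw [jostSolution, ← sub_eq_of_eq_add hh]
  exact congr($(Ring.inverse_mul_cancel _ hu) h).symm

lemma jostSolution_apply (hγ : 0 < γ) (hW : HasExpDecay γ W)
    (hk : ∀ l z, κ l z = k l z.2) (hu : ∀ p, IsUnit (1 - jostOp hγ hW κ p)) (s l : ℝ) (x : ℝ≥0) :
    jostSolution hγ hW κ e (s, l) x = jostProfile hγ hW κ e (s + x, l) := by
  set h := jostSolution hγ hW κ e (s, l)
  set τh : ℝ≥0 →ᵇ E := h.compContinuous ⟨(x + ·), by fun_prop⟩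
  have hτ (y : ℝ≥0) : τh y = h (x + y) := rfl
  suffices τh = jostSolution hγ hW κ e (s + x, l) by
    simpa [hτ, jostProfile] using DFunLike.congr_fun this 0
  refine eq_jostSolution hγ hW (hu _) ?_
  ext y
  rw [hτ, show h = _ from jostSolution_eq hγ hW (hu _)]
  simp [jostOp_apply hγ hW hk, hτ, add_assoc, h]

lemma jostProfile_eq (hγ : 0 < γ) (hW : HasExpDecay γ W)
    (hk : ∀ l z, κ l z = k l z.2) (hu : ∀ p, IsUnit (1 - jostOp hγ hW κ p)) (s l : ℝ) :
    jostProfile hγ hW κ e (s, l) =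
      e + ∫ t in Set.Ioi 0, k l t (W (s + t) (jostProfile hγ hW κ e (s + t, l))) := by
  rw [jostProfile, jostSolution_eq hγ hW (hu _), BoundedContinuousFunction.add_apply,
    BoundedContinuousFunction.const_apply, jostOp_apply hγ hW hk]
  congr 1
  refine setIntegral_congr_fun measurableSet_Ioi fun t (ht : 0 < t) ↦ ?_
  simp [jostSolution_apply hγ hW hk hu, ht.le]

variable [CompleteSpace E]

lemma exists_norm_inverse_one_sub_jostOp_le (hγ : 0 < γ) (hW : HasExpDecay γ W)
    (hk : ∀ l z, κ l z = k l z.2) (hm : m ≤ 0) (hκ : IsSymbol 0 m 0 fun p ↦ κ p.2) :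
    ∃ C, ∀ p, IsUnit (1 - jostOp hγ hW κ p) ∧ ‖Ring.inverse (1 - jostOp hγ hW κ p)‖ ≤ C := by
  obtain ⟨C, hC⟩ := exists_norm_le_of_isSymbol_snd hm hκ
  exact ⟨_, fun p ↦ isUnit_one_sub_of_norm_pow_le (norm_jostOp_pow_le hγ hW hk hC p)⟩

lemma isSymbol_inverse_one_sub_jostOp (hγ : 0 < γ) (hW : HasExpDecay γ W)
    (hk : ∀ l z, κ l z = k l z.2) (hm : m ≤ 0) {n : ℕ} (hκ : IsSymbol n m 0 fun p ↦ κ p.2) :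
    IsSymbol n 0 0 fun p ↦ Ring.inverse (1 - jostOp hγ hW κ p) := by
  obtain ⟨C, hC⟩ := exists_norm_inverse_one_sub_jostOp_le hγ hW hk hm hκ.isBigO
  refine .ringInverse (fun p ↦ (hC p).1)
    (.of_bound C (.of_forall fun p ↦ by simpa [symbolWeight] using (hC p).2)) ?_
  simpa [sub_eq_add_neg] using (IsSymbol.const 1).add
    (((isSymbol_jostOp hγ hW hκ).mono hm hγ.le).clm (-.id ℝ _))

lemma isSymbol_jostProfile_sub (hγ : 0 < γ) (hW : HasExpDecay γ W)
    (hk : ∀ l z, κ l z = k l z.2) (hm : m ≤ 0) {n : ℕ} (hκ : IsSymbol n m 0 fun p ↦ κ p.2) :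
    IsSymbol n m γ fun p ↦ jostProfile hγ hW κ e p - e := by
  obtain ⟨C, hC⟩ := exists_norm_inverse_one_sub_jostOp_le hγ hW hk hm hκ.isBigO
  have hRT (p : ℝ × ℝ) : Ring.inverse (1 - jostOp hγ hW κ p) * jostOp hγ hW κ p =
      Ring.inverse (1 - jostOp hγ hW κ p) - 1 := by
    rw [eq_sub_iff_add_eq', ← eq_sub_iff_add_eq, ← mul_one_sub, Ring.inverse_mul_cancel _ (hC p).1]
  have hsymbol := (isSymbol_inverse_one_sub_jostOp hγ hW hk hm hκ).mul (isSymbol_jostOp hγ hW hκ)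
  simp only [hRT, zero_add] at hsymbol
  exact (hsymbol.clm (.apply ℝ _ (.const ℝ≥0 e))).clm (BoundedContinuousFunction.evalCLM ℝ 0)

lemma contDiff_jostProfile (hγ : 0 < γ) (hW : HasExpDecay γ W)
    (hk : ∀ l z, κ l z = k l z.2) (hm : m ≤ 0) (hκ : ∀ n, IsSymbol n m 0 fun p ↦ κ p.2) :
    ContDiff ℝ (⊤ : ℕ∞) (jostProfile hγ hW κ e) :=
  contDiff_infty.mpr fun n ↦ by
    simpa only [sub_add_cancel] using
      (isSymbol_jostProfile_sub (e := e) hγ hW hk hm (hκ (n + 1))).contDiff.add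
        (contDiff_const (c := e))

lemma exists_norm_jostProfile_le (hγ : 0 < γ) (hW : HasExpDecay γ W)
    (hk : ∀ l z, κ l z = k l z.2) (hm : m ≤ 0) (hκ : IsSymbol 0 m 0 fun p ↦ κ p.2) :
    ∃ C, ∀ p, ‖jostProfile hγ hW κ e p‖ ≤ C := by
  obtain ⟨C, hC⟩ := exists_norm_inverse_one_sub_jostOp_le hγ hW hk hm hκ
  exact ⟨C * ‖BoundedContinuousFunction.const ℝ≥0 e‖, fun p ↦
    ((jostSolution hγ hW κ e p).norm_coe_le_norm 0).trans
      (ContinuousLinearMap.le_of_opNorm_le _ (hC p).2 _)⟩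

end VolterraEquation

section SecondOrderEquation

lemma integrableOn_Ioi_of_isBigO_exp_neg {E : Type*} [NormedAddCommGroup E] {γ : ℝ} {P : ℝ → E}
    (hγ : 0 < γ) (hP : Continuous P) (hPO : P =O[atTop] fun y ↦ exp (-γ * y)) (x : ℝ) :
    IntegrableOn P (Set.Ioi x) :=
  (integrable_norm_iff hP.aestronglyMeasurable).mp
    (integrable_of_isBigO_exp_neg hγ hP.norm.continuousOn hPO.norm_left)

variable {E : Type*} [NormedAddCommGroup E] [NormedSpace ℝ E] {γ m : ℝ}
  {Λ : E →L[ℝ] E} {σ c W : ℝ → E →L[ℝ] E} {P g : ℝ → E} {e : E}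

lemma integrableOn_Ioi_apply_exp_smul (hγ : 0 < γ) (hW : HasExpDecay γ W) {α : ℝ → E →L[ℝ] E}
    (hα : Continuous α) (hαO : α =O[atTop] fun y ↦ exp (m * y)) (hg : Continuous g)
    (hgO : g =O[atTop] fun _ ↦ (1 : ℝ)) (x : ℝ) :
    IntegrableOn (fun y ↦ α y (W y (exp (-(m * y)) • g y))) (Set.Ioi x) := by
  have hWc := hW.continuous
  refine integrableOn_Ioi_of_isBigO_exp_neg hγ (by fun_prop) ?_ x
  have hle (y : ℝ) : ‖α y (W y (exp (-(m * y)) • g y))‖ ≤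
      ‖α y‖ * (‖W y‖ * ‖exp (-(m * y)) • g y‖) :=
    (α y).le_opNorm_of_le ((W y).le_opNorm _)
  have hexp : (fun y ↦ exp (-(m * y)) • g y) =O[atTop] fun y ↦ exp (-(m * y)) • (1 : ℝ) :=
    (isBigO_refl _ _).smul hgO
  refine (IsBigO.of_norm_le hle).trans <|
    (hαO.norm_left.mul (hW.isBigO_atTop.norm_left.mul hexp.norm_left)).congr_right fun y ↦ ?_
  rw [smul_eq_mul, mul_one, ← Real.exp_add, ← Real.exp_add]
  ring_nf

lemma hasDerivAt_integral_Ioi_of_separable [CompleteSpace E] {K p p' q q' α β : ℝ → E →L[ℝ] E}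
    (hK : ∀ x y, K (y - x) = p x * α y + q x * β y)
    (hp : ∀ x, HasDerivAt p (p' x) x) (hq : ∀ x, HasDerivAt q (q' x) x)
    (hα : Continuous fun y ↦ α y (P y)) (hβ : Continuous fun y ↦ β y (P y))
    (hαi : ∀ x, IntegrableOn (fun y ↦ α y (P y)) (Set.Ioi x))
    (hβi : ∀ x, IntegrableOn (fun y ↦ β y (P y)) (Set.Ioi x)) (x : ℝ) :
    HasDerivAt (fun x ↦ ∫ y in Set.Ioi x, K (y - x) (P y))
      ((∫ y in Set.Ioi x, (p' x * α y + q' x * β y) (P y)) - K 0 (P x)) x := by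
  have hsplit (a b : E →L[ℝ] E) (x : ℝ) : ∫ y in Set.Ioi x, (a * α y + b * β y) (P y) =
      a (∫ y in Set.Ioi x, α y (P y)) + b (∫ y in Set.Ioi x, β y (P y)) := by
    rw [← a.integral_comp_comm (hαi x), ← b.integral_comp_comm (hβi x),
      ← integral_add (a.integrable_comp (hαi x)) (b.integrable_comp (hβi x))]
    rfl
  simp only [hK, hsplit]
  refine (((hp x).clm_apply (hasDerivAt_integral_Ioi hα hαi x)).add
    ((hq x).clm_apply (hasDerivAt_integral_Ioi hβ hβi x))).congr_deriv ?_
  have hK₀ : K 0 (P x) = p x (α x (P x)) + q x (β x (P x)) := by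
    rw [← sub_self x, hK]
    rfl
  rw [hK₀, map_neg, map_neg]
  abel

/-- `σ` and `c` are the sine and cosine operator functions of `Λ`: the solutions of `y'' = Λy`
with Cauchy data `(0, 1)` and `(1, 0)` at the origin, together with their subtraction formulas. -/
structure IsSineCosine (Λ : E →L[ℝ] E) (σ c : ℝ → E →L[ℝ] E) : Prop where
  sine_zero : σ 0 = 0
  cosine_zero : c 0 = 1
  hasDerivAt_sine (x : ℝ) : HasDerivAt σ (c x) x
  hasDerivAt_cosine (x : ℝ) : HasDerivAt c (Λ * σ x) x
  sine_sub (x y : ℝ) : σ (y - x) = c x * σ y - σ x * c y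
  cosine_sub (x y : ℝ) : c (y - x) = c x * c y - Λ * σ x * σ y

namespace IsSineCosine

lemma continuous_sine (h : IsSineCosine Λ σ c) : Continuous σ :=
  continuous_iff_continuousAt.mpr fun x ↦ (h.hasDerivAt_sine x).continuousAt

lemma continuous_cosine (h : IsSineCosine Λ σ c) : Continuous c :=
  continuous_iff_continuousAt.mpr fun x ↦ (h.hasDerivAt_cosine x).continuousAt

lemma iteratedDeriv_two_integral_sine [CompleteSpace E] (h : IsSineCosine Λ σ c)
    (hP : Continuous P) (hσ : ∀ x, IntegrableOn (fun y ↦ σ y (P y)) (Set.Ioi x))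
    (hc : ∀ x, IntegrableOn (fun y ↦ c y (P y)) (Set.Ioi x)) (x : ℝ) :
    iteratedDeriv 2 (fun x ↦ ∫ y in Set.Ioi x, σ (y - x) (P y)) x =
      Λ (∫ y in Set.Ioi x, σ (y - x) (P y)) + P x := by
  have hσP := h.continuous_sine.clm_apply hP
  have hcP := h.continuous_cosine.clm_apply hP
  have hsine (x : ℝ) : HasDerivAt (fun x ↦ ∫ y in Set.Ioi x, σ (y - x) (P y))
      (-∫ y in Set.Ioi x, c (y - x) (P y)) x := by
    refine (hasDerivAt_integral_Ioi_of_separable (p := c) (q := -σ)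
      (fun x y ↦ by rw [h.sine_sub, Pi.neg_apply, neg_mul, sub_eq_add_neg])
      h.hasDerivAt_cosine (fun x ↦ (h.hasDerivAt_sine x).neg) hσP hcP hσ hc x).congr_deriv ?_
    have hker (y : ℝ) : Λ * σ x * σ y + -c x * c y = -c (y - x) := by
      rw [h.cosine_sub]
      noncomm_ring
    simp only [hker, neg_apply, integral_neg, h.sine_zero, zero_apply, sub_zero]
  have hcosine : HasDerivAt (fun x ↦ ∫ y in Set.Ioi x, c (y - x) (P y))
      (-(Λ (∫ y in Set.Ioi x, σ (y - x) (P y)) + P x)) x := by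
    refine (hasDerivAt_integral_Ioi_of_separable (p := c) (q := fun x ↦ -(Λ * σ x))
      (fun x y ↦ by rw [h.cosine_sub, neg_mul, sub_eq_add_neg])
      h.hasDerivAt_cosine (fun x ↦ ((h.hasDerivAt_sine x).const_mul Λ).neg)
      hcP hσP hc hσ x).congr_deriv ?_
    have hker (y : ℝ) : Λ * σ x * c y + -(Λ * c x) * σ y = -(Λ * σ (y - x)) := by
      rw [h.sine_sub]
      noncomm_ring
    have hi : IntegrableOn (fun y ↦ σ (y - x) (P y)) (Set.Ioi x) := by
      simp only [h.sine_sub]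
      exact ((c x).integrable_comp (hσ x)).sub ((σ x).integrable_comp (hc x))
    simp only [hker, neg_apply, integral_neg, h.cosine_zero]
    rw [neg_add', ← Λ.integral_comp_comm hi]
    rfl
  rw [iteratedDeriv_succ', iteratedDeriv_one, funext fun x ↦ (hsine x).deriv]
  exact hcosine.neg.deriv.trans (neg_neg _)

end IsSineCosine

lemma exp_smul_eq_add_integral
    (heq : ∀ x, g x = e +
      ∫ t in Set.Ioi 0, (exp (-(m * t)) • σ t) (W (x + t) (g (x + t)))) (x : ℝ) :
    exp (-(m * x)) • g x = exp (-(m * x)) • e +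
      ∫ y in Set.Ioi x, σ (y - x) (W y (exp (-(m * y)) • g y)) := by
  set P : ℝ → E := fun y ↦ W y (exp (-(m * y)) • g y)
  have hshift : ∫ y in Set.Ioi x, σ (y - x) (P y) = ∫ t in Set.Ioi 0, σ t (P (x + t)) := by
    simpa using ((measurePreserving_add_left volume x).setIntegral_preimage_emb
      (MeasurableEquiv.addLeft x).measurableEmbedding (fun y ↦ σ (y - x) (P y)) (Set.Ioi x)).symm
  have hterm (t : ℝ) :
      exp (-(m * x)) • (exp (-(m * t)) • σ t) (W (x + t) (g (x + t))) = σ t (P (x + t)) := by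
    have hexp : exp (-(m * (x + t))) = exp (-(m * x)) * exp (-(m * t)) := by
      rw [mul_add, neg_add, Real.exp_add]
    simp only [P, map_smul, smul_apply, hexp, smul_smul]
  rw [hshift, heq x, smul_add, ← integral_smul]
  simp only [hterm]

lemma IsSineCosine.iteratedDeriv_two_exp_smul [CompleteSpace E] (h : IsSineCosine Λ σ c)
    (hσ : σ =O[atTop] fun y ↦ exp (m * y)) (hc : c =O[atTop] fun y ↦ exp (m * y))
    (he : Λ e = m ^ 2 • e) (hγ : 0 < γ) (hW : HasExpDecay γ W) (hg : ContDiff ℝ 2 g)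
    (hgO : g =O[atTop] fun _ ↦ (1 : ℝ))
    (heq : ∀ x, g x = e +
      ∫ t in Set.Ioi 0, (exp (-(m * t)) • σ t) (W (x + t) (g (x + t)))) (x : ℝ) :
    iteratedDeriv 2 (fun x ↦ exp (-(m * x)) • g x) x =
      Λ (exp (-(m * x)) • g x) + W x (exp (-(m * x)) • g x) := by
  set f : ℝ → E := fun x ↦ exp (-(m * x)) • g x
  set u : ℝ → E := fun x ↦ ∫ y in Set.Ioi x, σ (y - x) (W y (f y))
  have hWc := hW.continuous
  have hgc := hg.continuous
  have hi {α : ℝ → E →L[ℝ] E} (hα : Continuous α) (hαO : α =O[atTop] fun y ↦ exp (m * y)) :=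
    integrableOn_Ioi_apply_exp_smul hγ hW hα hαO hgc hgO
  have hf : f = (fun x ↦ exp (-m * x) • e) + u := funext fun x ↦ by
    rw [Pi.add_apply, neg_mul]
    exact exp_smul_eq_add_integral heq x
  have hu : ContDiff ℝ 2 u := by
    rw [← sub_eq_of_eq_add' hf]
    exact .sub (by fun_prop) (by fun_prop)
  have hexp : iteratedDeriv 2 (fun x ↦ exp (-m * x) • e) x = Λ (exp (-m * x) • e) := by
    rw [iteratedDeriv_smul_const (by fun_prop), iteratedDeriv_exp_const_mul, map_smul, he,
      smul_smul]
    ring_nf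
  calc iteratedDeriv 2 f x = Λ (exp (-m * x) • e) + iteratedDeriv 2 u x := by
        rw [hf, iteratedDeriv_add (by fun_prop) hu.contDiffAt, hexp]
    _ = Λ (exp (-m * x) • e) + (Λ (u x) + W x (f x)) := by
        rw [h.iteratedDeriv_two_integral_sine (by fun_prop) (hi h.continuous_sine hσ)
          (hi h.continuous_cosine hc)]
    _ = Λ (f x) + W x (f x) := by
        rw [← add_assoc, ← map_add, show f x = exp (-m * x) • e + u x from congr_fun hf x]

end SecondOrderEquation

section SchrodingerSystem

/-- The operator `diag (a, b) : (v₁, v₂) ↦ (a v₁, b v₂)` on `F × F`, as a linear function of the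
pair `(a, b)`. -/
def diag (F : Type*) [NormedAddCommGroup F] [NormedSpace ℝ F] :
    ℝ × ℝ →L[ℝ] F × F →L[ℝ] F × F :=
  ContinuousLinearMap.prodMapL ℝ F F F F ∘L
    (ContinuousLinearMap.toSpanSingleton ℝ (.id ℝ F)).prodMap
      (ContinuousLinearMap.toSpanSingleton ℝ (.id ℝ F))

variable {F : Type*} [NormedAddCommGroup F] [NormedSpace ℝ F]

@[simp]
lemma diag_apply (a b : ℝ) (v : F × F) : diag F (a, b) v = (a • v.1, b • v.2) := rfl

lemma diag_mul_diag (a b a' b' : ℝ) :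
    diag F (a, b) * diag F (a', b') = diag F (a * a', b * b') := by
  ext v <;> simp [mul_smul]

lemma hasDerivAt_diag {a b : ℝ → ℝ} {a' b' x : ℝ} (ha : HasDerivAt a a' x)
    (hb : HasDerivAt b b' x) : HasDerivAt (fun x ↦ diag F (a x, b x)) (diag F (a', b')) x :=
  (diag F).hasFDerivAt.comp_hasDerivAt x (ha.prodMk hb)

lemma mul_sinc_eq {l : ℝ} (hl : l ≠ 0) (x : ℝ) : x * sinc (x * l) = sin (x * l) / l := by
  rcases eq_or_ne x 0 with rfl | hx
  · simp
  · rw [sinc_of_ne_zero (mul_ne_zero hx hl)]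
    field_simp

lemma mul_mul_sinc (x l : ℝ) : l * (x * sinc (x * l)) = sin (x * l) := by
  rcases eq_or_ne l 0 with rfl | hl
  · simp
  · rw [mul_sinc_eq hl, mul_div_cancel₀ _ hl]

lemma hasDerivAt_mul_sinc (l x : ℝ) :
    HasDerivAt (fun x ↦ x * sinc (x * l)) (cos (x * l)) x := by
  rcases eq_or_ne l 0 with rfl | hl
  · simpa using hasDerivAt_id' x
  · simp only [mul_sinc_eq hl]
    simpa [hl] using (((hasDerivAt_mul_const l).sin).div_const l : HasDerivAt _ _ x)

lemma mul_sinc_sub (l x y : ℝ) : (y - x) * sinc ((y - x) * l) =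
    cos (x * l) * (y * sinc (y * l)) - x * sinc (x * l) * cos (y * l) := by
  rcases eq_or_ne l 0 with rfl | hl
  · simp
  · rw [mul_sinc_eq hl, mul_sinc_eq hl, mul_sinc_eq hl, sub_mul, sin_sub]
    ring

variable (F) in
lemma isSineCosine_diag (l : ℝ) {μ : ℝ} (hμ : μ ≠ 0) :
    IsSineCosine (diag F (-l ^ 2, μ ^ 2)) (fun x ↦ diag F (x * sinc (x * l), sinh (x * μ) / μ))
      fun x ↦ diag F (cos (x * l), cosh (x * μ)) where
  sine_zero := by ext v <;> simp
  cosine_zero := by ext v <;> simp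
  hasDerivAt_sine x := hasDerivAt_diag (hasDerivAt_mul_sinc l x) <| by
    simpa [hμ] using (((hasDerivAt_mul_const μ).sinh).div_const μ : HasDerivAt _ _ x)
  hasDerivAt_cosine x := by
    rw [diag_mul_diag]
    convert hasDerivAt_diag (F := F) (hasDerivAt_mul_const l).cos (hasDerivAt_mul_const μ).cosh
      using 3
    · linear_combination -l * mul_mul_sinc x l
    · field_simp
  sine_sub x y := by
    rw [diag_mul_diag, diag_mul_diag, ← map_sub, mul_sinc_sub, sub_mul, sinh_sub, Prod.mk_sub_mk]
    ring_nf
  cosine_sub x y := by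
    simp only [diag_mul_diag, ← map_sub, sub_mul, cos_sub, cosh_sub, Prod.mk_sub_mk]
    congr 2
    · linear_combination -sin (y * l) * mul_mul_sinc x l
        - l * (x * sinc (x * l)) * mul_mul_sinc y l
    · field_simp

/-- The matrix potential `W` with rows `(V₁, V₂)` and `(V₂, V₁)`, for which `ℋf = (λ² + 1) f` reads
`f'' = diag (-λ², μ²) f + W f`. -/
def potential (F : Type*) [NormedAddCommGroup F] [NormedSpace ℝ F] (V₁ V₂ : ℝ → ℝ) :
    ℝ → F × F →L[ℝ] F × F :=
  (fun x ↦ V₁ x • .id ℝ (F × F)) +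
    fun x ↦ V₂ x • (ContinuousLinearEquiv.prodComm ℝ F F : F × F →L[ℝ] F × F)

@[simp]
lemma potential_apply (V₁ V₂ : ℝ → ℝ) (x : ℝ) (v : F × F) :
    potential F V₁ V₂ x v = (V₁ x • v.1 + V₂ x • v.2, V₁ x • v.2 + V₂ x • v.1) := rfl

variable (F) in
lemma HasExpDecay.potential {γ : ℝ} {V₁ V₂ : ℝ → ℝ} (h₁ : HasExpDecay γ V₁)
    (h₂ : HasExpDecay γ V₂) : HasExpDecay γ (potential F V₁ V₂) :=
  (h₁.smul_const _).add (h₂.smul_const _)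

/-- The kernel `e^{-μt} diag (sin (λt) / λ, sinh (μt) / μ)` of the Volterra equation of the profile
`e^{μx} f₃(x, λ)`, where `sin (λt) / λ` is written `t sinc (λt)` to cover `λ = 0`. -/
def jostKernel (F : Type*) [NormedAddCommGroup F] [NormedSpace ℝ F] (l t : ℝ) :
    F × F →L[ℝ] F × F :=
  exp (-(mu l * t)) • diag F (t * sinc (t * l), sinh (t * mu l) / mu l)

/-- The bounded function `(x, t) ↦ jostKernel F l t` on the quarter plane. -/
def boundedJostKernel (F : Type*) [NormedAddCommGroup F] [NormedSpace ℝ F] (l : ℝ) :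
    ℝ≥0 × ℝ≥0 →ᵇ F × F →L[ℝ] F × F :=
  (diag F ∘L .inl ℝ ℝ ℝ).compLeftContinuousBounded _ (dampedKernel 1 one_pos hasExpDecay_sinc l) +
    (diag F ∘L .inr ℝ ℝ ℝ).compLeftContinuousBounded _
      (mu l ^ (-1 : ℝ) • (2⁻¹ : ℝ) • (1 - dampedKernel 0 two_pos (.const 1) l))

lemma boundedJostKernel_apply (l : ℝ) (z : ℝ≥0 × ℝ≥0) :
    boundedJostKernel F l z = jostKernel F l z.2 := by
  have hexp : exp (-(2 * mu l * z.2)) = exp (-(mu l * z.2)) * exp (-(mu l * z.2)) := by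
    rw [← Real.exp_add]
    ring_nf
  have hinv : exp (-(mu l * z.2)) * exp (mu l * z.2) = 1 := by
    rw [← Real.exp_add, neg_add_cancel, Real.exp_zero]
  have h₂ : mu l ^ (-1 : ℝ) * (2⁻¹ * (1 - exp (-(2 * mu l * z.2)))) =
      exp (-(mu l * z.2)) * (sinh (z.2 * mu l) / mu l) := by
    rw [sinh_eq, rpow_neg_one, hexp, mul_comm (z.2 : ℝ)]
    linear_combination -(2 * mu l)⁻¹ * hinv
  have h₁ : (z.2 : ℝ) * exp (-(mu l * z.2)) * sinc (z.2 * l) =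
      exp (-(mu l * z.2)) * (z.2 * sinc (z.2 * l)) := by ring
  rw [jostKernel, ← map_smul, Prod.smul_mk, smul_eq_mul, smul_eq_mul, ← h₁, ← h₂]
  refine (map_add (diag F) (_, 0) (0, _)).symm.trans ?_
  simp

lemma isSymbol_boundedJostKernel (n : ℕ) : IsSymbol n (-1) 0 fun p ↦ boundedJostKernel F p.2 := by
  have h₁ : IsSymbol n (-1) 0 fun p ↦ dampedKernel 1 one_pos hasExpDecay_sinc p.2 := by
    simpa using isSymbol_dampedKernel (n := n) 1 one_pos hasExpDecay_sinc
  have h₂ : IsSymbol n 0 0 fun p ↦ (2⁻¹ : ℝ) • (1 - dampedKernel 0 two_pos (.const 1) p.2) := by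
    have hexp : IsSymbol n 0 0 fun p ↦ dampedKernel 0 two_pos (.const 1) p.2 := by
      simpa using isSymbol_dampedKernel (n := n) 0 two_pos (.const 1)
    simpa [sub_eq_add_neg] using
      ((IsSymbol.const 1).add (hexp.clm (-.id ℝ _))).clm ((2⁻¹ : ℝ) • .id ℝ _)
  have h₂' := (IsSymbol.mu_rpow (n := n) (-1)).smul h₂
  rw [add_zero, add_zero] at h₂'
  exact (h₁.clm _).add (h₂'.clm _)

lemma isBigO_diag {a b f : ℝ → ℝ} {u : Filter ℝ} (ha : a =O[u] f) (hb : b =O[u] f) :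
    (fun x ↦ diag F (a x, b x)) =O[u] f :=
  ((diag F).isBigO_comp _ u).trans (ha.prod_left hb)

lemma mul_sinc_isBigO_exp (l : ℝ) {μ : ℝ} (hμ : 0 < μ) :
    (fun x ↦ x * sinc (x * l)) =O[atTop] fun x ↦ exp (μ * x) := by
  have hx : (fun x : ℝ ↦ x) =O[atTop] fun x ↦ exp (μ * x) := by
    simpa using (isLittleO_pow_exp_pos_mul_atTop 1 hμ).isBigO
  refine (IsBigO.of_norm_le fun x ↦ ?_).trans hx.norm_left
  rw [norm_mul]
  exact mul_le_of_le_one_right (norm_nonneg x) (abs_sinc_le_one _)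

lemma one_isBigO_exp {μ : ℝ} (hμ : 0 < μ) :
    (fun _ : ℝ ↦ (1 : ℝ)) =O[atTop] fun x ↦ exp (μ * x) := by
  simpa using (isLittleO_pow_exp_pos_mul_atTop 0 hμ).isBigO

lemma sinh_mul_isBigO_exp {μ : ℝ} (hμ : 0 ≤ μ) :
    (fun x ↦ sinh (x * μ)) =O[atTop] fun x ↦ exp (μ * x) := by
  refine .of_bound 1 ((eventually_ge_atTop 0).mono fun x hx ↦ ?_)
  rw [norm_of_nonneg (sinh_nonneg_iff.mpr (mul_nonneg hx hμ)), norm_of_nonneg (exp_pos _).le,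
    mul_comm μ, ← sinh_add_cosh]
  linarith [cosh_pos (x * μ)]

lemma cosh_mul_isBigO_exp {μ : ℝ} (hμ : 0 ≤ μ) :
    (fun x ↦ cosh (x * μ)) =O[atTop] fun x ↦ exp (μ * x) := by
  refine .of_bound 1 ((eventually_ge_atTop 0).mono fun x hx ↦ ?_)
  rw [norm_of_nonneg (cosh_pos _).le, norm_of_nonneg (exp_pos _).le, mul_comm μ, ← sinh_add_cosh]
  linarith [sinh_nonneg_iff.mpr (mul_nonneg hx hμ)]

variable (F) in
lemma diag_sine_isBigO_exp (l : ℝ) {μ : ℝ} (hμ : 0 < μ) :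
    (fun x ↦ diag F (x * sinc (x * l), sinh (x * μ) / μ)) =O[atTop] fun x ↦ exp (μ * x) := by
  refine isBigO_diag (mul_sinc_isBigO_exp l hμ) ?_
  simpa only [div_eq_inv_mul] using (sinh_mul_isBigO_exp hμ.le).const_mul_left μ⁻¹

variable (F) in
lemma diag_cosine_isBigO_exp (l : ℝ) {μ : ℝ} (hμ : 0 < μ) :
    (fun x ↦ diag F (cos (x * l), cosh (x * μ))) =O[atTop] fun x ↦ exp (μ * x) :=
  isBigO_diag ((IsBigO.of_norm_le fun x ↦ abs_cos_le_one (x * l)).trans (one_isBigO_exp hμ))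
    (cosh_mul_isBigO_exp hμ.le)

end SchrodingerSystem

lemma isSolution_of_iteratedDeriv_two {V₁ V₂ : ℝ → ℝ} {l : ℝ} {f : ℝ → ℂ × ℂ}
    (hf : ContDiff ℝ 2 f)
    (h : ∀ x, iteratedDeriv 2 f x = diag ℂ (-l ^ 2, mu l ^ 2) (f x) + potential ℂ V₁ V₂ x (f x)) :
    IsSolution V₁ V₂ ((l ^ 2 + 1 : ℝ) : ℂ) f := by
  refine ⟨hf, fun x ↦ ?_⟩
  have hcomp (L : ℂ × ℂ →L[ℝ] ℂ) : iteratedDeriv 2 (fun y ↦ L (f y)) x = L (iteratedDeriv 2 f x) :=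
    congr($(L.iteratedFDeriv_comp_left hf.contDiffAt (x := x) le_rfl) fun _ ↦ 1)
  have hfst := hcomp (.fst ℝ ℂ ℂ)
  have hsnd := hcomp (.snd ℝ ℂ ℂ)
  simp only [ContinuousLinearMap.coe_fst', ContinuousLinearMap.coe_snd'] at hfst hsnd
  rw [matH, hfst, hsnd, h, mu_sq]
  ext <;> simp <;> ring

section JostFunction

variable {γ : ℝ} (hγ : 0 < γ) {V₁ V₂ : ℝ → ℝ} (h₁ : HasExpDecay γ V₁) (h₂ : HasExpDecay γ V₂)

/-- The profile `g(x, λ) = e^{μx} f₃(x, λ)` of the Jost function, as a function of `(x, λ)`. -/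
def matrixJostProfile : ℝ × ℝ → ℂ × ℂ :=
  jostProfile hγ (h₁.potential ℂ h₂) (boundedJostKernel ℂ) (0, 1)

/-- The Jost function `f₃(x, λ) = e^{-μx} g(x, λ)` of the matrix Schrödinger operator. -/
def matrixJostFunction (x l : ℝ) : ℂ × ℂ := exp (-(mu l * x)) • matrixJostProfile hγ h₁ h₂ (x, l)

lemma exp_smul_matrixJostFunction (x l : ℝ) :
    exp (mu l * x) • matrixJostFunction hγ h₁ h₂ x l = matrixJostProfile hγ h₁ h₂ (x, l) := by
  rw [matrixJostFunction, smul_smul, ← Real.exp_add, add_neg_cancel, Real.exp_zero, one_smul]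

lemma contDiff_matrixJostProfile : ContDiff ℝ (⊤ : ℕ∞) (matrixJostProfile hγ h₁ h₂) :=
  contDiff_jostProfile hγ _ boundedJostKernel_apply (by norm_num) isSymbol_boundedJostKernel

lemma contDiff_matrixJostFunction :
    ContDiff ℝ (⊤ : ℕ∞) fun p : ℝ × ℝ ↦ matrixJostFunction hγ h₁ h₂ p.1 p.2 :=
  ((contDiff_mu.comp contDiff_snd).mul contDiff_fst).neg.exp.smul
    (contDiff_matrixJostProfile hγ h₁ h₂)

lemma exists_norm_matrixJostProfile_le : ∃ C, ∀ p, ‖matrixJostProfile hγ h₁ h₂ p‖ ≤ C :=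
  exists_norm_jostProfile_le hγ _ boundedJostKernel_apply (by norm_num)
    (isSymbol_boundedJostKernel 0)

lemma matrixJostProfile_eq (x l : ℝ) : matrixJostProfile hγ h₁ h₂ (x, l) =
    (0, 1) + ∫ t in Set.Ioi 0,
      jostKernel ℂ l t (potential ℂ V₁ V₂ (x + t) (matrixJostProfile hγ h₁ h₂ (x + t, l))) := by
  obtain ⟨C, hC⟩ := exists_norm_inverse_one_sub_jostOp_le hγ (h₁.potential ℂ h₂)
    boundedJostKernel_apply (by norm_num) (isSymbol_boundedJostKernel 0)
  exact jostProfile_eq hγ _ boundedJostKernel_apply (fun p ↦ (hC p).1) x l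

lemma isSolution_matrixJostFunction (l : ℝ) :
    IsSolution V₁ V₂ ((l ^ 2 + 1 : ℝ) : ℂ) fun x ↦ matrixJostFunction hγ h₁ h₂ x l := by
  have hline : ContDiff ℝ 2 fun x : ℝ ↦ (x, l) := contDiff_id.prodMk contDiff_const
  have heigen : diag ℂ (-l ^ 2, mu l ^ 2) (0, 1) = mu l ^ 2 • (0, 1) := by simp
  obtain ⟨C, hC⟩ := exists_norm_matrixJostProfile_le hγ h₁ h₂
  refine isSolution_of_iteratedDeriv_two
    ((contDiff_infty.mp (contDiff_matrixJostFunction hγ h₁ h₂) 2).comp hline) fun x ↦ ?_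
  exact (isSineCosine_diag ℂ l (mu_pos l).ne').iteratedDeriv_two_exp_smul
    (diag_sine_isBigO_exp ℂ l (mu_pos l)) (diag_cosine_isBigO_exp ℂ l (mu_pos l)) heigen hγ
    (h₁.potential ℂ h₂) ((contDiff_infty.mp (contDiff_matrixJostProfile hγ h₁ h₂) 2).comp hline)
    (.of_bound C (.of_forall fun x ↦ by simpa using hC (x, l)))
    (fun x ↦ matrixJostProfile_eq hγ h₁ h₂ x l) x

lemma exists_norm_iteratedDeriv_matrixJostProfile_sub_le (k n : ℕ) :
    ∃ C, ∀ l x, 0 ≤ x →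
      ‖iteratedDeriv n (fun m ↦ iteratedDeriv k
        (fun y ↦ matrixJostProfile hγ h₁ h₂ (y, m) - (0, 1)) x) l‖ ≤
        C * mu l ^ (-(1 : ℝ) - n) * exp (-γ * x) :=
  have hsymbol : IsSymbol (0 + n + k) (-1) γ fun p ↦ matrixJostProfile hγ h₁ h₂ p - (0, 1) :=
    isSymbol_jostProfile_sub hγ _ boundedJostKernel_apply (by norm_num)
      (isSymbol_boundedJostKernel _)
  ((hsymbol.iteratedDeriv_fst k).iteratedDeriv_snd n).exists_norm_le

end JostFunction

theorem stmt_4_general {γ : ℝ} (hγ : 0 < γ) {V₁ V₂ : ℝ → ℝ} (h₁ : HasExpDecay γ V₁)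
    (h₂ : HasExpDecay γ V₂) :
    ∃ f₃ : ℝ → ℝ → ℂ × ℂ,
      ContDiff ℝ (⊤ : ℕ∞) (fun p : ℝ × ℝ => f₃ p.1 p.2) ∧
      (∀ lam : ℝ, IsSolution V₁ V₂ (((lam ^ 2 + 1 : ℝ) : ℂ)) (fun x => f₃ x lam)) ∧
      (∃ C : ℝ, ∀ lam x : ℝ,
        ‖Real.exp (mu lam * x) • f₃ x lam‖ ≤ C) ∧
      (∀ k l : ℕ, ∃ C : ℝ, ∀ lam : ℝ, ∀ x : ℝ, 0 ≤ x →
        ‖iteratedDeriv l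
            (fun m => iteratedDeriv k
              (fun y => Real.exp (mu m * y) • f₃ y m - ((0 : ℂ), (1 : ℂ))) x) lam‖
          ≤ C * mu lam ^ (-(1 : ℝ) - (l : ℝ)) * Real.exp (-γ * x)) := by
  refine ⟨matrixJostFunction hγ h₁ h₂, contDiff_matrixJostFunction hγ h₁ h₂,
    isSolution_matrixJostFunction hγ h₁ h₂, ?_, ?_⟩ <;>
    simp only [exp_smul_matrixJostFunction]
  · obtain ⟨C, hC⟩ := exists_norm_matrixJostProfile_le hγ h₁ h₂
    exact ⟨C, fun l x ↦ hC (x, l)⟩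
  · exact exists_norm_iteratedDeriv_matrixJostProfile_sub_le hγ h₁ h₂

lemma PotentialHyp.hasExpDecay {γ : ℝ} {V₁ V₂ : ℝ → ℝ} (hV : PotentialHyp γ V₁ V₂) :
    HasExpDecay γ V₁ ∧ HasExpDecay γ V₂ := by
  obtain ⟨-, -, hV₁, hV₂, -, -, hC⟩ := hV
  choose C hC using hC
  exact ⟨⟨hV₁, fun k ↦ ⟨C k, fun x ↦ (le_add_of_nonneg_right (abs_nonneg _)).trans (hC k x)⟩⟩,
    ⟨hV₂, fun k ↦ ⟨C k, fun x ↦ (le_add_of_nonneg_left (abs_nonneg _)).trans (hC k x)⟩⟩⟩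

theorem stmt_4 (γ : ℝ) (V₁ V₂ : ℝ → ℝ) (hV : PotentialHyp γ V₁ V₂) :
    ∃ f₃ : ℝ → ℝ → ℂ × ℂ,
      ContDiff ℝ (⊤ : ℕ∞) (fun p : ℝ × ℝ => f₃ p.1 p.2) ∧
      (∀ lam : ℝ, IsSolution V₁ V₂ (((lam ^ 2 + 1 : ℝ) : ℂ)) (fun x => f₃ x lam)) ∧
      (∃ C : ℝ, ∀ lam x : ℝ,
        ‖Real.exp (mu lam * x) • f₃ x lam‖ ≤ C) ∧
      (∀ k l : ℕ, ∃ C : ℝ, ∀ lam : ℝ, ∀ x : ℝ, 0 ≤ x →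
        ‖iteratedDeriv l
            (fun m => iteratedDeriv k
              (fun y => Real.exp (mu m * y) • f₃ y m - ((0 : ℂ), (1 : ℂ))) x) lam‖
          ≤ C * mu lam ^ (-(1 : ℝ) - (l : ℝ)) * Real.exp (-γ * x)) :=
  stmt_4_general hV.1 hV.hasExpDecay.1 hV.hasExpDecay.2
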